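/- arXiv:1403.5413 — 3 statements merged into one kernel-verified Lean document; each statement's English description precedes it below -/
import Mathlib

section
/- Let f, g : [a;b] → ℝ be regulated functions, let [c;d] ⊆ [a;b], let c = t_0 < t_1 < ... < t_n = d be a partition of [c;d], let ξ_0 = c and let ξ_1, ..., ξ_n satisfy t_{i−1} ≤ ξ_i ≤ t_i for i = 1, ..., n. Set ε_{−1} := sup_{c≤t≤d} |g(d) − g(t)|, and let δ_0 ≥ δ_1 ≥ ... ≥ δ_r ≥ 0 and ε_0 ≥ ε_1 ≥ ... ≥ ε_r ≥ 0 be finite nonincreasing sequences of non-negative reals. Then |Σ_{i=1}^n f(ξ_i)(g(t_i) − g(t_{i−1})) − f(c)·(g(d) − g(c))| ≤ Σ_{k=0}^r 2^k · ε_{k−1} · TV^{δ_k}(f,[c;d]) + Σ_{k=0}^r 2^k · δ_k · TV^{ε_k}(g,[c;d]) + n·δ_r·ε_r. -/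
open Filter Set

/-- Truncated variation of `f` on `[a;b]` with truncation parameter `δ`. -/
noncomputable def truncVar (f : ℝ → ℝ) (δ a b : ℝ) : ENNReal :=
  ⨆ (n : ℕ) (t : Fin (n + 1) → ℝ) (_ : StrictMono t)
    (_ : ∀ i, t i ∈ Set.Icc a b),
    ∑ i : Fin n, ENNReal.ofReal (|f (t i.succ) - f (t i.castSucc)| - δ)

/-- p-variation of `f` on `[a;b]`. -/
noncomputable def pVar (f : ℝ → ℝ) (p a b : ℝ) : ENNReal :=
  ⨆ (n : ℕ) (t : Fin (n + 1) → ℝ) (_ : StrictMono t)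
    (_ : ∀ i, t i ∈ Set.Icc a b),
    ∑ i : Fin n, ENNReal.ofReal (|f (t i.succ) - f (t i.castSucc)| ^ p)

/-- The p-variation norm `(V^p(f,[a;b]))^{1/p}`. -/
noncomputable def pVarNorm (f : ℝ → ℝ) (p a b : ℝ) : ℝ :=
  (pVar f p a b).toReal ^ (1 / p)

/-- Oscillation norm `sup_{a ≤ s < t ≤ b} |f t - f s|`. -/
noncomputable def oscNorm (f : ℝ → ℝ) (a b : ℝ) : ℝ :=
  sSup {x | ∃ s ∈ Set.Icc a b, ∃ t ∈ Set.Icc a b, s < t ∧ x = |f t - f s|}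

/-- Sup norm `sup_{a ≤ t ≤ b} |f t|`. -/
noncomputable def supNorm (f : ℝ → ℝ) (a b : ℝ) : ℝ :=
  sSup {x | ∃ t ∈ Set.Icc a b, x = |f t|}

/-- `I` is the Riemann–Stieltjes integral `∫_a^b f dg`. -/
def RSIntegral (f g : ℝ → ℝ) (a b : ℝ) (I : ℝ) : Prop :=
  ∀ ε > (0 : ℝ), ∃ δ > (0 : ℝ), ∀ (n : ℕ) (t : Fin (n + 1) → ℝ) (ξ : Fin n → ℝ),
    StrictMono t → t 0 = a → t (Fin.last n) = b →
    (∀ i : Fin n, t i.castSucc ≤ ξ i ∧ ξ i ≤ t i.succ) →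
    (∀ i : Fin n, t i.succ - t i.castSucc < δ) →
    |∑ i : Fin n, f (ξ i) * (g (t i.succ) - g (t i.castSucc)) - I| < ε

/-- `f` is regulated on `[a;b]`: all the relevant one-sided limits exist and are finite. -/
def Regulated (f : ℝ → ℝ) (a b : ℝ) : Prop :=
  (∃ L : ℝ, Tendsto f (nhdsWithin a (Set.Ioi a)) (nhds L)) ∧
  (∃ L : ℝ, Tendsto f (nhdsWithin b (Set.Iio b)) (nhds L)) ∧
  ∀ x ∈ Set.Ioo a b,
    (∃ L : ℝ, Tendsto f (nhdsWithin x (Set.Iio x)) (nhds L)) ∧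
    (∃ L : ℝ, Tendsto f (nhdsWithin x (Set.Ioi x)) (nhds L))

/-- `f` and `g` have no common points of discontinuity on `[a;b]`. -/
def NoCommonDiscont (f g : ℝ → ℝ) (a b : ℝ) : Prop :=
  ∀ x ∈ Set.Icc a b,
    ContinuousWithinAt f (Set.Icc a b) x ∨ ContinuousWithinAt g (Set.Icc a b) x
/-- Recursively defined discrete truncated variation. -/
noncomputable def DTV (x : ℕ → ℝ) (δ : ℝ) : ℕ → ℝ
  | m => ⨆ j : Fin m, (DTV x δ j.1 + max (|x m - x j.1| - δ) 0)
decreasing_by exact j.2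

theorem DTV_zero (x : ℕ → ℝ) (δ : ℝ) : DTV x δ 0 = 0 := by
  rw [DTV]; exact Real.iSup_of_isEmpty _

theorem DTV_step (x : ℕ → ℝ) (δ : ℝ) (j k : ℕ) (h : j < k) :
    DTV x δ j + max (|x k - x j| - δ) 0 ≤ DTV x δ k := by
  rw [DTV.eq_1 x δ k]
  exact le_ciSup (f := fun j : Fin k => DTV x δ j.1 + max (|x k - x j.1| - δ) 0)
    (Set.finite_range _).bddAbove ⟨j, h⟩

theorem DTV_attain (x : ℕ → ℝ) (δ : ℝ) (k : ℕ) (h : 0 < k) :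
    ∃ j < k, DTV x δ k = DTV x δ j + max (|x k - x j| - δ) 0 := by
  have : Nonempty (Fin k) := ⟨⟨0, h⟩⟩
  obtain ⟨j, hj⟩ := exists_eq_ciSup_of_finite
    (f := fun j : Fin k => DTV x δ j.1 + max (|x k - x j.1| - δ) 0)
  refine ⟨j.1, j.2, ?_⟩
  rw [DTV.eq_1 x δ k]
  exact hj.symm

theorem DTV_nonneg (x : ℕ → ℝ) (δ : ℝ) (k : ℕ) : 0 ≤ DTV x δ k := by
  rcases Nat.eq_zero_or_pos k with h | h
  · rw [h, DTV_zero]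
  · have := DTV_step x δ 0 k h
    rw [DTV_zero] at this
    linarith [le_max_right (|x k - x 0| - δ) 0]

theorem DTV_anti (x : ℕ → ℝ) (δ δ' : ℝ) (h : δ' ≤ δ) (k : ℕ) : DTV x δ k ≤ DTV x δ' k := by
  induction k using Nat.strong_induction_on with
  | _ k ih =>
    rcases Nat.eq_zero_or_pos k with h0 | h0
    · rw [h0, DTV_zero, DTV_zero]
    · obtain ⟨j, hj, e⟩ := DTV_attain x δ k h0
      have h1 := DTV_step x δ' j k hj
      have h2 := ih j hj
      have h3 : max (|x k - x j| - δ) 0 ≤ max (|x k - x j| - δ') 0 :=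
        max_le_max (by linarith) le_rfl
      linarith

theorem truncVar_snoc (f : ℝ → ℝ) (δ c u U : ℝ) (hcu : c ≤ u) (hu : u ≤ U) (n : ℕ)
    (t : Fin (n + 1) → ℝ) (ht : StrictMono t) (hc : ∀ i, c ≤ t i) (hl : t (Fin.last n) < u) :
    StrictMono (Fin.snoc (α := fun _ => ℝ) t u : Fin (n + 1 + 1) → ℝ) ∧
    (∀ i, (Fin.snoc (α := fun _ => ℝ) t u : Fin (n + 1 + 1) → ℝ) i ∈ Set.Icc c U) ∧
    (∑ i : Fin n, ENNReal.ofReal (|f (t i.succ) - f (t i.castSucc)| - δ))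
      + ENNReal.ofReal (|f u - f (t (Fin.last n))| - δ) =
    ∑ i : Fin (n + 1), ENNReal.ofReal
      (|f ((Fin.snoc (α := fun _ => ℝ) t u : Fin (n + 1 + 1) → ℝ) i.succ)
        - f ((Fin.snoc (α := fun _ => ℝ) t u : Fin (n + 1 + 1) → ℝ) i.castSucc)| - δ) := by
  refine ⟨?_, ?_, ?_⟩
  · rw [Fin.strictMono_iff_lt_succ]
    intro i
    rw [Fin.snoc_castSucc]
    refine Fin.lastCases ?_ (fun j => ?_) i
    · rw [Fin.succ_last, Fin.snoc_last]; exact hl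
    · rw [Fin.succ_castSucc, Fin.snoc_castSucc]; exact ht (Fin.castSucc_lt_succ)
  · intro i
    refine Fin.lastCases ?_ (fun j => ?_) i
    · rw [Fin.snoc_last]; exact ⟨hcu, hu⟩
    · rw [Fin.snoc_castSucc]
      exact ⟨hc j, by linarith [ht.monotone (Fin.le_last j)]⟩
  · rw [Fin.sum_univ_castSucc]
    simp only [Fin.snoc_castSucc, Fin.succ_last, Fin.snoc_last, Fin.succ_castSucc]

theorem le_truncVar (f : ℝ → ℝ) (δ c U : ℝ) (n : ℕ)
    (t : Fin (n + 1) → ℝ) (ht : StrictMono t) (hc : ∀ i, t i ∈ Set.Icc c U) :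
    ∑ i : Fin n, ENNReal.ofReal (|f (t i.succ) - f (t i.castSucc)| - δ) ≤ truncVar f δ c U := by
  unfold truncVar
  exact le_iSup_of_le n (le_iSup_of_le t (le_iSup_of_le ht (le_iSup_of_le hc le_rfl)))

theorem truncVar_super (f : ℝ → ℝ) (δ c s u : ℝ) (hδ : 0 ≤ δ) (hcs : c ≤ s) (hsu : s ≤ u) :
    truncVar f δ c s + ENNReal.ofReal (|f u - f s| - δ) ≤ truncVar f δ c u := by
  rcases hsu.eq_or_lt with h | hsu'
  · subst h
    rw [sub_self, abs_zero, zero_sub, ENNReal.ofReal_of_nonpos (by linarith), add_zero]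
  · have key : ∀ (n : ℕ) (t : Fin (n + 1) → ℝ), StrictMono t → (∀ i, t i ∈ Set.Icc c s) →
        ∑ i : Fin n, ENNReal.ofReal (|f (t i.succ) - f (t i.castSucc)| - δ)
          + ENNReal.ofReal (|f u - f s| - δ) ≤ truncVar f δ c u := by
      intro n t ht hc
      rcases (hc (Fin.last n)).2.eq_or_lt with h | h
      · obtain ⟨h1, h2, h3⟩ := truncVar_snoc f δ c u u (hcs.trans hsu) le_rfl n t ht
          (fun i => (hc i).1) (by rw [h]; exact hsu')
        rw [h] at h3
        rw [h3]
        exact le_truncVar f δ c u _ _ h1 h2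
      · obtain ⟨h1, h2, h3⟩ := truncVar_snoc f δ c s s hcs le_rfl n t ht
          (fun i => (hc i).1) h
        obtain ⟨h1', h2', h3'⟩ := truncVar_snoc f δ c u u (hcs.trans hsu) le_rfl _ _ h1
          (fun i => (h2 i).1) (by rw [Fin.snoc_last]; exact hsu')
        rw [Fin.snoc_last] at h3'
        refine le_trans ?_ (le_truncVar f δ c u _ _ h1' h2')
        rw [← h3', ← h3]
        gcongr
        exact le_self_add
    by_cases hx : ENNReal.ofReal (|f u - f s| - δ) ≤ truncVar f δ c u
    · have hfin : ENNReal.ofReal (|f u - f s| - δ) ≠ ⊤ := ENNReal.ofReal_ne_top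
      rw [← ENNReal.le_sub_iff_add_le_right hfin hx]
      rw [truncVar]
      refine iSup_le fun n => iSup_le fun t => iSup_le fun ht => iSup_le fun hc => ?_
      rw [ENNReal.le_sub_iff_add_le_right hfin hx]
      exact key n t ht hc
    · exfalso
      apply hx
      have := key 0 (fun _ => s) (fun i j h => by omega) (fun _ => ⟨hcs, le_rfl⟩)
      simpa using this

theorem DTV_le_truncVar (f : ℝ → ℝ) (δ c : ℝ) (hδ : 0 ≤ δ) (n : ℕ) (p x : ℕ → ℝ)
    (hp : ∀ i j, i ≤ j → j ≤ n → p i ≤ p j) (hc : c ≤ p 0)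
    (hx : ∀ i j, i ≤ n → j ≤ n → x i - x j = f (p i) - f (p j)) (k : ℕ) (hk : k ≤ n) :
    ENNReal.ofReal (DTV x δ k) ≤ truncVar f δ c (p k) := by
  induction k using Nat.strong_induction_on with
  | _ k ih =>
    rcases Nat.eq_zero_or_pos k with h0 | h0
    · rw [h0, DTV_zero]; simp
    · obtain ⟨j, hj, e⟩ := DTV_attain x δ k h0
      rw [e, ENNReal.ofReal_add (DTV_nonneg _ _ _) (le_max_right _ _), hx k j hk (by omega)]
      have h2 := ih j hj (by omega)
      refine le_trans ?_ (truncVar_super f δ c (p j) (p k) hδ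
        (hc.trans (hp 0 j (by omega) (by omega))) (hp j k hj.le hk))
      refine add_le_add h2 ?_
      rw [ENNReal.ofReal_max]; simp

theorem regulated_bdd (g : ℝ → ℝ) (a b : ℝ) (hg : Regulated g a b) :
    ∃ M, ∀ x ∈ Set.Icc a b, |g x| ≤ M := by
  obtain ⟨⟨La, ha⟩, ⟨Lb, hb⟩, hi⟩ := hg
  have ev : ∀ (x L : ℝ) (l : Filter ℝ), Tendsto g l (nhds L) → ∃ M, ∀ᶠ y in l, |g y| ≤ M := by
    intro x L l h
    exact ⟨|L| + 1, (h.abs.eventually (gt_mem_nhds (lt_add_one _))).mono fun y hy => hy.le⟩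
  have evR : ∀ (x L : ℝ), Tendsto g (nhdsWithin x (Set.Ioi x)) (nhds L) →
      ∃ M, ∀ᶠ y in nhdsWithin x (Set.Ici x), |g y| ≤ M := by
    intro x L h
    obtain ⟨M, hM⟩ := ev x L _ h
    refine ⟨max M |g x|, ?_⟩
    rw [← Set.Ioi_insert, nhdsWithin_insert, eventually_sup]
    exact ⟨by simp, hM.mono fun y hy => hy.trans (le_max_left _ _)⟩
  have evL : ∀ (x L : ℝ), Tendsto g (nhdsWithin x (Set.Iio x)) (nhds L) →
      ∃ M, ∀ᶠ y in nhdsWithin x (Set.Iic x), |g y| ≤ M := by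
    intro x L h
    obtain ⟨M, hM⟩ := ev x L _ h
    refine ⟨max M |g x|, ?_⟩
    rw [← Set.Iio_insert, nhdsWithin_insert, eventually_sup]
    exact ⟨by simp, hM.mono fun y hy => hy.trans (le_max_left _ _)⟩
  refine isCompact_Icc.induction_on (p := fun s => ∃ M, ∀ x ∈ s, |g x| ≤ M) ?_ ?_ ?_ ?_
  · exact ⟨0, by simp⟩
  · rintro s t hst ⟨M, hM⟩
    exact ⟨M, fun x hx => hM x (hst hx)⟩
  · rintro s t ⟨M, hM⟩ ⟨N, hN⟩
    refine ⟨max M N, ?_⟩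
    rintro x (hx | hx)
    · exact (hM x hx).trans (le_max_left _ _)
    · exact (hN x hx).trans (le_max_right _ _)
  · intro x hx
    suffices h : ∃ M, ∀ᶠ y in nhdsWithin x (Set.Icc a b), |g y| ≤ M by
      obtain ⟨M, hM⟩ := h
      exact ⟨{y | |g y| ≤ M}, hM, M, fun y hy => hy⟩
    rcases hx.1.eq_or_lt with h1 | h1
    · subst h1
      obtain ⟨M, hM⟩ := evR _ _ ha
      exact ⟨M, hM.filter_mono (nhdsWithin_mono _ fun y hy => hy.1)⟩
    rcases hx.2.eq_or_lt with h2 | h2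
    · subst h2
      obtain ⟨M, hM⟩ := evL _ _ hb
      exact ⟨M, hM.filter_mono (nhdsWithin_mono _ fun y hy => hy.2)⟩
    obtain ⟨⟨L, hL⟩, ⟨R, hR⟩⟩ := hi x ⟨h1, h2⟩
    obtain ⟨M, hM⟩ := evL _ _ hL
    obtain ⟨N, hN⟩ := evR _ _ hR
    refine ⟨max M N, Filter.Eventually.filter_mono nhdsWithin_le_nhds ?_⟩
    rw [← nhdsLE_sup_nhdsGE, eventually_sup]
    exact ⟨hM.mono fun y hy => hy.trans (le_max_left _ _),
      hN.mono fun y hy => hy.trans (le_max_right _ _)⟩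

theorem play_mono (n : ℕ) (T x : ℕ → ℝ) (δ : ℝ)
    (hT : ∀ j k, j < k → k ≤ n → T j + max (|x k - x j| - δ) 0 ≤ T k)
    (j k : ℕ) (hjk : j ≤ k) (hk : k ≤ n) : T j ≤ T k := by
  rcases hjk.eq_or_lt with h | h
  · rw [h]
  · linarith [hT j k h hk, le_max_right (|x k - x j| - δ) 0]

theorem play_lemma (n : ℕ) (T x : ℕ → ℝ) (δ : ℝ) (hδ : 0 ≤ δ) (hT0 : 0 ≤ T 0)
    (hT : ∀ j k, j < k → k ≤ n → T j + max (|x k - x j| - δ) 0 ≤ T k) :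
    ∃ y : ℕ → ℝ, (∀ i ≤ n, |x i - y i| ≤ δ / 2) ∧
      ∑ i ∈ Finset.range n, |y (i + 1) - y i| ≤ T n := by
  have hpos : ∀ k ≤ n, 0 ≤ T k := fun k hk =>
    hT0.trans (play_mono n T x δ hT 0 k (Nat.zero_le _) hk)
  have hT' : ∀ j k, j < k → k ≤ n → T j + (|x k - x j| - δ) ≤ T k := fun j k h1 h2 => by
    linarith [hT j k h1 h2, le_max_left (|x k - x j| - δ) 0]
  have upd : ∀ (m : ℕ) (y : ℕ → ℝ) (v : ℝ),
      ∑ i ∈ Finset.range (m + 1), |Function.update y (m + 1) v (i + 1)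
        - Function.update y (m + 1) v i|
      = ∑ i ∈ Finset.range m, |y (i + 1) - y i| + |v - y m| := by
    intro m y v
    rw [Finset.sum_range_succ]
    congr 1
    · refine Finset.sum_congr rfl fun i hi => ?_
      have := Finset.mem_range.1 hi
      rw [Function.update_of_ne (by omega), Function.update_of_ne (by omega)]
    · rw [Function.update_self, Function.update_of_ne (by omega)]
  have updb : ∀ (m : ℕ) (y : ℕ → ℝ) (v : ℝ), (∀ i ≤ m, |x i - y i| ≤ δ / 2) →
      |x (m + 1) - v| ≤ δ / 2 → ∀ i ≤ m + 1, |x i - Function.update y (m + 1) v i| ≤ δ / 2 := by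
    intro m y v h1 h2 i hi
    rcases hi.eq_or_lt with h | h
    · subst h; rw [Function.update_self]; exact h2
    · rw [Function.update_of_ne (by omega)]; exact h1 i (by omega)
  have main : ∀ m ≤ n,
      (∃ lo hi, lo ≤ m ∧ hi ≤ m ∧ (∀ i ≤ m, x lo ≤ x i ∧ x i ≤ x hi) ∧ x hi - x lo ≤ δ) ∨
      (∃ (y : ℕ → ℝ) (σ : ℝ) (j k : ℕ), (∀ i ≤ m, |x i - y i| ≤ δ / 2) ∧ (σ = 1 ∨ σ = -1) ∧
        j < k ∧ k ≤ m ∧ δ ≤ σ * (x k - x j) ∧ y m = x k - σ * (δ / 2) ∧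
        ∑ i ∈ Finset.range m, |y (i + 1) - y i| ≤ T j + (σ * (x k - x j) - δ)) := by
    intro m
    induction m with
    | zero =>
      intro _
      left
      refine ⟨0, 0, le_rfl, le_rfl, ?_, by simpa using hδ⟩
      intro i hi
      obtain rfl : i = 0 := by omega
      exact ⟨le_rfl, le_rfl⟩
    | succ m ih =>
      intro hm
      rcases ih (by omega) with ⟨lo, hi, hlo, hhi, hb, hd⟩ | ⟨y, σ, j, k, hy, hσ, hjk, hkm, hg, hym, hs⟩
      · -- phase 0
        have start : ∀ (σ : ℝ) (j : ℕ), (σ = 1 ∨ σ = -1) → j ≤ m → δ ≤ σ * (x (m + 1) - x j) →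
            (∀ i ≤ m, 0 ≤ σ * (x i - x j) ∧ σ * (x i - x j) ≤ δ) →
            (∃ (y : ℕ → ℝ) (σ : ℝ) (j k : ℕ), (∀ i ≤ m + 1, |x i - y i| ≤ δ / 2) ∧
              (σ = 1 ∨ σ = -1) ∧
              j < k ∧ k ≤ m + 1 ∧ δ ≤ σ * (x k - x j) ∧ y (m + 1) = x k - σ * (δ / 2) ∧
              ∑ i ∈ Finset.range (m + 1), |y (i + 1) - y i| ≤ T j + (σ * (x k - x j) - δ)) := by
          intro σ j hσ hj h1 h2
          refine ⟨Function.update (fun _ => x j + σ * (δ / 2)) (m + 1)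
            (x (m + 1) - σ * (δ / 2)), σ, j, m + 1, ?_, hσ, by omega, le_rfl, h1,
            Function.update_self .., ?_⟩
          · apply updb
            · intro i hi
              have := h2 i hi
              rw [abs_le]
              rcases hσ with rfl | rfl <;> constructor <;> linarith
            · rw [abs_le]
              rcases hσ with rfl | rfl <;> constructor <;> linarith
          · rw [upd]
            simp only [sub_self, abs_zero, Finset.sum_const_zero, zero_add]
            have h3 : |x (m + 1) - σ * (δ / 2) - (x j + σ * (δ / 2))|
                ≤ σ * (x (m + 1) - x j) - δ := by
              rw [abs_le]
              rcases hσ with rfl | rfl <;> constructor <;> linarith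
            linarith [hpos j (by omega)]
        by_cases c1 : δ ≤ x (m + 1) - x lo
        · right
          refine start 1 lo (Or.inl rfl) hlo (by linarith) ?_
          intro i hi'
          have := hb i hi'
          constructor <;> linarith
        by_cases c2 : δ ≤ x hi - x (m + 1)
        · right
          refine start (-1) hi (Or.inr rfl) hhi (by linarith) ?_
          intro i hi'
          have := hb i hi'
          constructor <;> linarith
        push Not at c1 c2
        left
        have hlh := hb lo hlo
        rcases le_total (x (m + 1)) (x lo) with c3 | c3
        · refine ⟨m + 1, hi, le_rfl, by omega, ?_, by linarith⟩
          intro i hi'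
          rcases hi'.eq_or_lt with h | h
          · subst h; constructor <;> linarith
          · have := hb i (by omega)
            constructor <;> linarith
        · rcases le_total (x hi) (x (m + 1)) with c4 | c4
          · refine ⟨lo, m + 1, by omega, le_rfl, ?_, by linarith⟩
            intro i hi'
            rcases hi'.eq_or_lt with h | h
            · subst h; constructor <;> linarith
            · have := hb i (by omega)
              constructor <;> linarith
          · refine ⟨lo, hi, by omega, by omega, ?_, by linarith⟩
            intro i hi'
            rcases hi'.eq_or_lt with h | h
            · subst h; constructor <;> linarith
            · have := hb i (by omega)
              constructor <;> linarith
      · right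
        by_cases c1 : 0 ≤ σ * (x (m + 1) - x k)
        · -- extend
          refine ⟨Function.update y (m + 1) (x (m + 1) - σ * (δ / 2)), σ, j, m + 1, ?_, hσ,
            by omega, le_rfl, ?_, Function.update_self .., ?_⟩
          · apply updb _ _ _ hy
            rw [abs_le]
            rcases hσ with rfl | rfl <;> constructor <;> linarith
          · rcases hσ with rfl | rfl <;> linarith
          · rw [upd, hym]
            have h3 : |x (m + 1) - σ * (δ / 2) - (x k - σ * (δ / 2))|
                ≤ σ * (x (m + 1) - x k) := by
              rw [abs_le]
              rcases hσ with rfl | rfl <;> constructor <;> linarith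
            have : σ * (x (m + 1) - x j) = σ * (x (m + 1) - x k) + σ * (x k - x j) := by ring
            linarith
        by_cases c2 : σ * (x (m + 1) - x k) ≤ -δ
        · -- turn
          refine ⟨Function.update y (m + 1) (x (m + 1) - (-σ) * (δ / 2)), -σ, k, m + 1, ?_, ?_,
            by omega, le_rfl, ?_, Function.update_self .., ?_⟩
          · apply updb _ _ _ hy
            rw [abs_le]
            rcases hσ with rfl | rfl <;> constructor <;> linarith
          · rcases hσ with rfl | rfl <;> simp
          · rcases hσ with rfl | rfl <;> linarith
          · rw [upd, hym]
            have h3 : |x (m + 1) - (-σ) * (δ / 2) - (x k - σ * (δ / 2))|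
                ≤ -σ * (x (m + 1) - x k) - δ := by
              rw [abs_le]
              rcases hσ with rfl | rfl <;> constructor <;> linarith
            have h4 := hT' j k hjk (by omega)
            have h5 : σ * (x k - x j) ≤ |x k - x j| := by
              rcases hσ with rfl | rfl
              · rw [one_mul]; exact le_abs_self _
              · rw [neg_one_mul]; exact neg_le_abs _
            linarith
        · push Not at c1 c2
          refine ⟨Function.update y (m + 1) (y m), σ, j, k, ?_, hσ,
            hjk, by omega, hg, ?_, ?_⟩
          · apply updb _ _ _ hy
            rw [hym, abs_le]
            rcases hσ with rfl | rfl <;> constructor <;> linarith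
          · rw [Function.update_self, hym]
          · rw [upd, sub_self, abs_zero, add_zero]
            exact hs
  rcases main n le_rfl with ⟨lo, hi, hlo, hhi, hb, hd⟩ | ⟨y, σ, j, k, hy, hσ, hjk, hkm, hg, hym, hs⟩
  · refine ⟨fun _ => x lo + δ / 2, ?_, ?_⟩
    · intro i hi'
      have := hb i hi'
      rw [abs_le]
      constructor <;> linarith
    · simpa using hpos n le_rfl
  · refine ⟨y, hy, hs.trans ?_⟩
    have h4 := hT' j k hjk (by omega)
    have h5 : σ * (x k - x j) ≤ |x k - x j| := by
      rcases hσ with rfl | rfl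
      · rw [one_mul]; exact le_abs_self _
      · rw [neg_one_mul]; exact neg_le_abs _
    have := play_mono n T x δ hT k n hkm le_rfl
    linarith

/-- Riemann–Stieltjes sum of sequences. -/
def SS (n : ℕ) (x g : ℕ → ℝ) : ℝ := ∑ i ∈ Finset.range n, x (i + 1) * (g (i + 1) - g i)

/-- Variation of a sequence. -/
def VV (n : ℕ) (x : ℕ → ℝ) : ℝ := ∑ i ∈ Finset.range n, |x (i + 1) - x i|

theorem step_lemma (n : ℕ) (x g Tx Tg : ℕ → ℝ) (e δ ε : ℝ) (he : 0 ≤ e) (hδ : 0 ≤ δ) (hε : 0 ≤ ε)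
    (hx0 : x 0 = 0) (hgn : g n = 0) (hge : ∀ i ≤ n, |g i| ≤ e)
    (hTx0 : 0 ≤ Tx 0)
    (hTx : ∀ j k, j < k → k ≤ n → Tx j + max (|x k - x j| - δ) 0 ≤ Tx k)
    (hTg0 : 0 ≤ Tg 0)
    (hTg : ∀ j k, j < k → k ≤ n → Tg j + max (|g k - g j| - ε) 0 ≤ Tg k) :
    ∃ x' g' : ℕ → ℝ, x' 0 = 0 ∧ g' n = 0 ∧
      (∀ i ≤ n, ∀ j ≤ n, |x' i - x' j| ≤ δ) ∧ (∀ i ≤ n, ∀ j ≤ n, |g' i - g' j| ≤ ε) ∧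
      VV n (fun i => x i - x' i) ≤ Tx n ∧ VV n (fun i => g i - g' i) ≤ Tg n ∧
      |SS n x g| ≤ e * Tx n + δ * Tg n + |SS n x' g'| := by
  obtain ⟨y, hy, hyT⟩ := play_lemma n Tx x δ hδ hTx0 hTx
  obtain ⟨z, hz, hzT⟩ := play_lemma n Tg g ε hε hTg0 hTg
  obtain ⟨x', hx'⟩ : ∃ x' : ℕ → ℝ, ∀ i, x' i = x i - (y i - y 0) := ⟨_, fun i => rfl⟩
  obtain ⟨g', hg'⟩ : ∃ g' : ℕ → ℝ, ∀ i, g' i = g i - (z i - z n) := ⟨_, fun i => rfl⟩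
  have hxo : ∀ i ≤ n, ∀ j ≤ n, |x' i - x' j| ≤ δ := by
    intro i hi j hj
    have h1 := abs_le.1 (hy i hi)
    have h2 := abs_le.1 (hy j hj)
    rw [hx', hx', abs_le]
    constructor <;> linarith [h1.1, h1.2, h2.1, h2.2]
  have hgo : ∀ i ≤ n, ∀ j ≤ n, |g' i - g' j| ≤ ε := by
    intro i hi j hj
    have h1 := abs_le.1 (hz i hi)
    have h2 := abs_le.1 (hz j hj)
    rw [hg', hg', abs_le]
    constructor <;> linarith [h1.1, h1.2, h2.1, h2.2]
  have hVx : VV n (fun i => x i - x' i) = ∑ i ∈ Finset.range n, |y (i + 1) - y i| := by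
    unfold VV
    refine Finset.sum_congr rfl fun i _ => ?_
    congr 1
    simp only [hx']; ring
  have hVg : VV n (fun i => g i - g' i) = ∑ i ∈ Finset.range n, |z (i + 1) - z i| := by
    unfold VV
    refine Finset.sum_congr rfl fun i _ => ?_
    congr 1
    simp only [hg']; ring
  have hx'0 : x' 0 = 0 := by rw [hx', hx0]; ring
  refine ⟨x', g', hx'0, by rw [hg', hgn]; ring, hxo, hgo, hVx.trans_le hyT,
    hVg.trans_le hzT, ?_⟩
  have e1 : SS n x g = -∑ i ∈ Finset.range n, g i * (y (i + 1) - y i)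
      + ∑ i ∈ Finset.range n, x' (i + 1) * (z (i + 1) - z i) + SS n x' g' := by
    have ab : ∑ i ∈ Finset.range n, (y (i + 1) - y 0) * (g (i + 1) - g i)
        = -∑ i ∈ Finset.range n, g i * (y (i + 1) - y i) := by
      have := Finset.sum_range_sub (fun i => (y i - y 0) * g i) n
      simp only [hgn, sub_self, mul_zero, zero_mul] at this
      rw [eq_neg_iff_add_eq_zero, ← this, ← Finset.sum_add_distrib]
      refine Finset.sum_congr rfl fun i _ => ?_
      ring
    rw [← ab]
    unfold SS
    rw [← Finset.sum_add_distrib, ← Finset.sum_add_distrib]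
    refine Finset.sum_congr rfl fun i _ => ?_
    simp only [hx', hg']
    ring
  have b1 : |∑ i ∈ Finset.range n, g i * (y (i + 1) - y i)| ≤ e * Tx n := by
    refine (Finset.abs_sum_le_sum_abs _ _).trans ?_
    refine le_trans ?_ (mul_le_mul_of_nonneg_left hyT he)
    rw [Finset.mul_sum]
    refine Finset.sum_le_sum fun i hi => ?_
    rw [abs_mul]
    exact mul_le_mul_of_nonneg_right (hge i (Finset.mem_range.1 hi).le) (abs_nonneg _)
  have b2 : |∑ i ∈ Finset.range n, x' (i + 1) * (z (i + 1) - z i)| ≤ δ * Tg n := by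
    refine (Finset.abs_sum_le_sum_abs _ _).trans ?_
    refine le_trans ?_ (mul_le_mul_of_nonneg_left hzT hδ)
    rw [Finset.mul_sum]
    refine Finset.sum_le_sum fun i hi => ?_
    rw [abs_mul]
    have := hxo (i + 1) (Finset.mem_range.1 hi) 0 (Nat.zero_le _)
    rw [hx'0, sub_zero] at this
    exact mul_le_mul_of_nonneg_right this (abs_nonneg _)
  rw [e1]
  refine (abs_add_le _ _).trans ?_
  have := abs_add_le (-∑ i ∈ Finset.range n, g i * (y (i + 1) - y i))
    (∑ i ∈ Finset.range n, x' (i + 1) * (z (i + 1) - z i))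
  rw [abs_neg] at this
  linarith

theorem VV_add (n : ℕ) (x y z : ℕ → ℝ) :
    VV n (fun i => x i - z i) ≤ VV n (fun i => x i - y i) + VV n (fun i => y i - z i) := by
  unfold VV
  rw [← Finset.sum_add_distrib]
  refine Finset.sum_le_sum fun i _ => ?_
  refine le_trans (le_of_eq ?_) (abs_add_le _ _)
  congr 1; ring

theorem VV_incr (u : ℕ → ℝ) (j k : ℕ) (h : j ≤ k) : VV j u + |u k - u j| ≤ VV k u := by
  induction k, h using Nat.le_induction with
  | base => simp
  | succ k hk ih =>
    have : VV (k + 1) u = VV k u + |u (k + 1) - u k| := by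
      unfold VV; rw [Finset.sum_range_succ]
    have h2 := abs_sub_le (u (k + 1)) (u k) (u j)
    linarith

theorem ctl_residual (n : ℕ) (x x' : ℕ → ℝ) (δ : ℝ) (j k : ℕ) (h : j < k) :
    (DTV x δ j + VV j (fun i => x i - x' i)) + max (|x' k - x' j| - δ) 0
      ≤ DTV x δ k + VV k (fun i => x i - x' i) := by
  have h1 := DTV_step x δ j k h
  have h2 := VV_incr (fun i => x i - x' i) j k h.le
  have h3 : |x' k - x' j| ≤ |x k - x j| + |x k - x' k - (x j - x' j)| := by
    refine le_trans (le_of_eq ?_) (abs_sub _ _)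
    congr 1; ring
  have h4 : max (|x' k - x' j| - δ) 0 ≤ max (|x k - x j| - δ) 0
      + |x k - x' k - (x j - x' j)| := by
    apply max_le
    · linarith [le_max_left (|x k - x j| - δ) 0]
    · linarith [le_max_right (|x k - x j| - δ) 0, abs_nonneg (x k - x' k - (x j - x' j))]
  linarith

theorem geo_bound (D : ℕ → ℝ) (m : ℕ) (h : ∀ k < m, D k ≤ D m) :
    D m + ∑ k ∈ Finset.range m, 2 ^ k * D k ≤ 2 ^ m * D m := by
  have h1 : ∑ k ∈ Finset.range m, (2 : ℝ) ^ k * D k ≤ ∑ k ∈ Finset.range m, 2 ^ k * D m :=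
    Finset.sum_le_sum fun k hk =>
      mul_le_mul_of_nonneg_left (h k (Finset.mem_range.1 hk)) (by positivity)
  have h2 : ∑ k ∈ Finset.range m, (2 : ℝ) ^ k * D m = (2 ^ m - 1) * D m := by
    rw [← Finset.sum_mul, geom_sum_eq (by norm_num)]; norm_num
  rw [h2] at h1
  linarith

theorem anti_of_step (r : ℕ) (δ : ℕ → ℝ) (h : ∀ k < r, δ (k + 1) ≤ δ k) (k m : ℕ) (hkm : k ≤ m)
    (hm : m ≤ r) : δ m ≤ δ k := by
  induction m, hkm using Nat.le_induction with
  | base => exact le_rfl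
  | succ m hk ih => exact (h m (by omega)).trans (ih (by omega))

theorem discrete_main (n r : ℕ) (x g : ℕ → ℝ) (δ ε : ℕ → ℝ) (e : ℝ) (he : 0 ≤ e)
    (hx0 : x 0 = 0) (hgn : g n = 0) (hge : ∀ i ≤ n, |g i| ≤ e)
    (hδnn : ∀ k ≤ r, 0 ≤ δ k) (hεnn : ∀ k ≤ r, 0 ≤ ε k)
    (hδa : ∀ k < r, δ (k + 1) ≤ δ k) (hεa : ∀ k < r, ε (k + 1) ≤ ε k) :
    |SS n x g| ≤ ∑ k ∈ Finset.range (r + 1),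
        2 ^ k * (if k = 0 then e else ε (k - 1)) * DTV x (δ k) n
      + ∑ k ∈ Finset.range (r + 1), 2 ^ k * δ k * DTV g (ε k) n + n * δ r * ε r := by
  have main : ∀ m ≤ r + 1, ∃ x' g' : ℕ → ℝ, x' 0 = 0 ∧ g' n = 0 ∧
      (∀ i ≤ n, |g' i| ≤ if m = 0 then e else ε (m - 1)) ∧
      (m ≠ 0 → (∀ i ≤ n, ∀ j ≤ n, |x' i - x' j| ≤ δ (m - 1)) ∧
        (∀ i ≤ n, ∀ j ≤ n, |g' i - g' j| ≤ ε (m - 1))) ∧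
      VV n (fun i => x i - x' i) ≤ ∑ k ∈ Finset.range m, 2 ^ k * DTV x (δ k) n ∧
      VV n (fun i => g i - g' i) ≤ ∑ k ∈ Finset.range m, 2 ^ k * DTV g (ε k) n ∧
      |SS n x g| ≤ ∑ k ∈ Finset.range m, 2 ^ k * (if k = 0 then e else ε (k - 1)) * DTV x (δ k) n
        + ∑ k ∈ Finset.range m, 2 ^ k * δ k * DTV g (ε k) n + |SS n x' g'| := by
    intro m
    induction m with
    | zero =>
      intro _
      exact ⟨x, g, hx0, hgn, by simpa using hge, by simp, by simp [VV], by simp [VV], by simp⟩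
    | succ m ih =>
      intro hm
      obtain ⟨x', g', hx'0, hg'n, hge', _, hVx, hVg, hS⟩ := ih (by omega)
      have hmr : m ≤ r := by omega
      set E : ℝ := if m = 0 then e else ε (m - 1) with hE
      have hE0 : 0 ≤ E := by
        rw [hE]; split_ifs
        · exact he
        · exact hεnn _ (by omega)
      obtain ⟨x'', g'', h1, h2, h3, h4, h5, h6, h7⟩ := step_lemma n x' g'
        (fun k => DTV x (δ m) k + VV k (fun i => x i - x' i))
        (fun k => DTV g (ε m) k + VV k (fun i => g i - g' i)) E (δ m) (ε m) hE0
        (hδnn m hmr) (hεnn m hmr) hx'0 hg'n hge' (by simp [DTV_zero, VV])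
        (fun j k hjk _ => ctl_residual n x x' (δ m) j k hjk) (by simp [DTV_zero, VV])
        (fun j k hjk _ => ctl_residual n g g' (ε m) j k hjk)
      have gx := geo_bound (fun k => DTV x (δ k) n) m fun k hk =>
        DTV_anti _ _ _ (anti_of_step r δ hδa k m hk.le hmr) _
      have gg := geo_bound (fun k => DTV g (ε k) n) m fun k hk =>
        DTV_anti _ _ _ (anti_of_step r ε hεa k m hk.le hmr) _
      refine ⟨x'', g'', h1, h2, ?_, fun _ => ⟨by simpa using h3, by simpa using h4⟩, ?_, ?_, ?_⟩
      · intro i hi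
        have := h4 i hi n le_rfl
        rw [h2, sub_zero] at this
        simpa using this
      · rw [Finset.sum_range_succ]
        linarith [VV_add n x x' x'']
      · rw [Finset.sum_range_succ]
        linarith [VV_add n g g' g'']
      · rw [Finset.sum_range_succ, Finset.sum_range_succ, ← hE]
        have q1 := mul_le_mul_of_nonneg_left (show DTV x (δ m) n + VV n (fun i => x i - x' i)
          ≤ 2 ^ m * DTV x (δ m) n by linarith) hE0
        have q2 := mul_le_mul_of_nonneg_left (show DTV g (ε m) n + VV n (fun i => g i - g' i)
          ≤ 2 ^ m * DTV g (ε m) n by linarith) (hδnn m hmr)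
        linarith
  obtain ⟨x', g', hx'0, hg'n, _, ho, _, _, hS⟩ := main (r + 1) le_rfl
  obtain ⟨ho1, ho2⟩ := ho (by omega)
  simp only [Nat.add_sub_cancel] at ho1 ho2
  refine hS.trans ?_
  have : |SS n x' g'| ≤ n * δ r * ε r := by
    unfold SS
    refine (Finset.abs_sum_le_sum_abs _ _).trans ?_
    refine (Finset.sum_le_card_nsmul _ _ (δ r * ε r) fun i hi => ?_).trans (le_of_eq ?_)
    · have hi' := Finset.mem_range.1 hi
      rw [abs_mul]
      have q := ho1 (i + 1) hi' 0 (Nat.zero_le _)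
      rw [hx'0, sub_zero] at q
      exact mul_le_mul q (ho2 (i + 1) hi' i hi'.le) (abs_nonneg _) (hδnn r le_rfl)
    · simp; ring
  linarith

/-- Remark 2 (symmetric version of Lemma 1): estimate for Riemann–Stieltjes sums. -/
theorem rs_sum_estimate'
    (a b c d : ℝ) (hac : a ≤ c) (hcd : c ≤ d) (hdb : d ≤ b)
    (f g : ℝ → ℝ) (hf : Regulated f a b) (hg : Regulated g a b)
    (n : ℕ) (t : Fin (n + 1) → ℝ) (ht : StrictMono t)
    (ht0 : t 0 = c) (htn : t (Fin.last n) = d)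
    (ξ : Fin (n + 1) → ℝ) (hξ0 : ξ 0 = c)
    (hξ : ∀ i : Fin n, t i.castSucc ≤ ξ i.succ ∧ ξ i.succ ≤ t i.succ)
    (r : ℕ) (δ ε : ℕ → ℝ)
    (hδnn : ∀ k ≤ r, 0 ≤ δ k) (hεnn : ∀ k ≤ r, 0 ≤ ε k)
    (hδa : ∀ k < r, δ (k + 1) ≤ δ k) (hεa : ∀ k < r, ε (k + 1) ≤ ε k)
    (εm1 : ℝ) (hεm1 : εm1 = sSup {x | ∃ s ∈ Set.Icc c d, x = |g d - g s|}) :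
    ENNReal.ofReal
        |∑ i : Fin n, f (ξ i.succ) * (g (t i.succ) - g (t i.castSucc)) -
          f c * (g d - g c)|
      ≤ (∑ k ∈ Finset.range (r + 1),
            ENNReal.ofReal ((2 : ℝ) ^ k * (if k = 0 then εm1 else ε (k - 1))) *
              truncVar f (δ k) c d)
        + (∑ k ∈ Finset.range (r + 1),
            ENNReal.ofReal ((2 : ℝ) ^ k * δ k) * truncVar g (ε k) c d)
        + ENNReal.ofReal ((n : ℝ) * δ r * ε r) := by
  have hmono : ∀ i j : Fin (n + 1), i ≤ j → ξ i ≤ ξ j := by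
    have : Monotone ξ := by
      rw [Fin.monotone_iff_le_succ]
      intro i
      refine le_trans ?_ (hξ i).1
      refine Fin.cases ?_ (fun j => ?_) i.castSucc
      · rw [hξ0, ht0]
      · exact (hξ j).2
    exact this
  have hξd : ξ (Fin.last n) ≤ d := by
    rw [← htn]
    refine Fin.cases ?_ (fun j => ?_) (Fin.last n)
    · rw [hξ0, ht0]
    · exact (hξ j).2
  obtain ⟨P, hP⟩ : ∃ P : ℕ → ℝ, ∀ i (h : i < n + 1), P i = ξ ⟨i, h⟩ :=
    ⟨fun i => if h : i < n + 1 then ξ ⟨i, h⟩ else 0, fun i h => by simp [h]⟩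
  obtain ⟨Q, hQ⟩ : ∃ Q : ℕ → ℝ, ∀ i (h : i < n + 1), Q i = t ⟨i, h⟩ :=
    ⟨fun i => if h : i < n + 1 then t ⟨i, h⟩ else 0, fun i h => by simp [h]⟩
  have hP0 : P 0 = c := by rw [hP 0 (by omega)]; exact hξ0
  have hQ0 : Q 0 = c := by rw [hQ 0 (by omega)]; exact ht0
  have hQn : Q n = d := by rw [hQ n (by omega)]; exact htn
  have hPn : P n ≤ d := by rw [hP n (by omega)]; exact hξd
  have hPm : ∀ i j, i ≤ j → j ≤ n → P i ≤ P j := by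
    intro i j hij hj
    rw [hP i (by omega), hP j (by omega)]
    exact hmono _ _ hij
  have hQm : ∀ i j, i ≤ j → j ≤ n → Q i ≤ Q j := by
    intro i j hij hj
    rw [hQ i (by omega), hQ j (by omega)]
    exact ht.monotone hij
  obtain ⟨M, hM⟩ := regulated_bdd g a b hg
  have hbdd : BddAbove {x | ∃ s ∈ Set.Icc c d, x = |g d - g s|} := by
    refine ⟨M + M, ?_⟩
    rintro x ⟨s, hs, rfl⟩
    have h1 := hM d ⟨hac.trans hcd, hdb⟩
    have h2 := hM s ⟨hac.trans hs.1, hs.2.trans hdb⟩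
    exact (abs_sub _ _).trans (add_le_add h1 h2)
  have hle : ∀ s ∈ Set.Icc c d, |g d - g s| ≤ εm1 := by
    intro s hs
    rw [hεm1]
    exact le_csSup hbdd ⟨s, hs, rfl⟩
  have he : 0 ≤ εm1 := (abs_nonneg _).trans (hle d ⟨hcd, le_rfl⟩)
  have key := discrete_main n r (fun i => f (P i) - f c) (fun i => g (Q i) - g d) δ ε εm1 he
    (by simp [hP0]) (by simp [hQn])
    (fun i hi => by
      rw [abs_sub_comm]
      exact hle _ ⟨hQ0.symm.le.trans (hQm 0 i (by omega) hi), (hQm i n hi le_rfl).trans hQn.le⟩)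
    hδnn hεnn hδa hεa
  have hSS : ∑ i : Fin n, f (ξ i.succ) * (g (t i.succ) - g (t i.castSucc)) - f c * (g d - g c)
      = SS n (fun i => f (P i) - f c) (fun i => g (Q i) - g d) := by
    have tel : g d - g c = ∑ i ∈ Finset.range n, (g (Q (i + 1)) - g (Q i)) := by
      rw [Finset.sum_range_sub (fun i => g (Q i)), hQn, hQ0]
    have e1 : ∑ i : Fin n, f (ξ i.succ) * (g (t i.succ) - g (t i.castSucc))
        = ∑ i ∈ Finset.range n, f (P (i + 1)) * (g (Q (i + 1)) - g (Q i)) := by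
      rw [Finset.sum_range]
      refine Finset.sum_congr rfl fun i _ => ?_
      rw [hP (i + 1) (by omega), hQ (i + 1) (by omega), hQ i (by omega)]
      rfl
    rw [e1, tel, Finset.mul_sum, ← Finset.sum_sub_distrib]
    unfold SS
    refine Finset.sum_congr rfl fun i _ => ?_
    ring
  have tmono : ∀ (h : ℝ → ℝ) (η s : ℝ), s ≤ d → truncVar h η c s ≤ truncVar h η c d := by
    intro h η s hs
    rw [truncVar]
    refine iSup_le fun n => iSup_le fun t => iSup_le fun ht => iSup_le fun hc => ?_
    exact le_truncVar h η c d n t ht fun i => ⟨(hc i).1, (hc i).2.trans hs⟩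
  have hE : ∀ k ≤ r, 0 ≤ (if k = 0 then εm1 else ε (k - 1)) := by
    intro k hk
    split_ifs
    · exact he
    · exact hεnn _ (by omega)
  rw [hSS]
  refine (ENNReal.ofReal_le_ofReal key).trans ?_
  refine ENNReal.ofReal_add_le.trans ?_
  gcongr
  refine ENNReal.ofReal_add_le.trans ?_
  gcongr
  · rw [ENNReal.ofReal_sum_of_nonneg]
    · refine Finset.sum_le_sum fun k hk => ?_
      have hk' : k ≤ r := by have := Finset.mem_range.1 hk; omega
      rw [ENNReal.ofReal_mul (mul_nonneg (by positivity) (hE k hk'))]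
      gcongr
      exact (DTV_le_truncVar f (δ k) c (hδnn k hk') n P _ hPm hP0.symm.le
        (fun i j _ _ => by ring) n le_rfl).trans (tmono _ _ _ hPn)
    · intro k hk
      have hk' : k ≤ r := by have := Finset.mem_range.1 hk; omega
      exact mul_nonneg (mul_nonneg (by positivity) (hE k hk')) (DTV_nonneg _ _ _)
  · rw [ENNReal.ofReal_sum_of_nonneg]
    · refine Finset.sum_le_sum fun k hk => ?_
      have hk' : k ≤ r := by have := Finset.mem_range.1 hk; omega
      rw [ENNReal.ofReal_mul (mul_nonneg (by positivity) (hδnn k hk'))]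
      gcongr
      exact (DTV_le_truncVar g (ε k) c (hεnn k hk') n Q _ hQm hQ0.symm.le
        (fun i j _ _ => by ring) n le_rfl).trans (tmono _ _ _ hQn.le)
    · intro k hk
      have hk' : k ≤ r := by have := Finset.mem_range.1 hk; omega
      exact mul_nonneg (mul_nonneg (by positivity) (hδnn k hk')) (DTV_nonneg _ _ _)
end

section
/- Let a < b, let f, g : [a;b] → ℝ be regulated functions with no common points of discontinuity, and let ξ ∈ [a;b]. Let (η_k)_{k≥0} and (θ_k)_{k≥0} be nonincreasing sequences of non-negative reals with η_k → 0 and θ_k → 0. Set η_{-1} := sup_{a≤t≤b} |f(t) − f(a)|, θ_{-1} := sup_{a≤t≤b} |g(b) − g(t)|, S := Σ_{k=0}^{∞} 2^k · η_{k−1} · TV^{θ_k}(g,[a;b]) + Σ_{k=0}^{∞} 2^k · θ_k · TV^{η_k}(f,[a;b]), and S̃ := Σ_{k=0}^{∞} 2^k · θ_{k−1} · TV^{η_k}(f,[a;b]) + Σ_{k=0}^{∞} 2^k · η_k · TV^{θ_k}(g,[a;b]). If S < +∞ or S̃ < +∞, then the Riemann–Stieltjes integral ∫_a^b f dg exists and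 |∫_a^b f dg − f(ξ)·(g(b) − g(a))| ≤ 2·min{S, S̃}. -/
open Filter Set

inductive Ch (f : ℝ → ℝ) (δ a b : ℝ) : ℝ → ℝ → Prop
  | single (s : ℝ) (hs : s ∈ Icc a b) : Ch f δ a b s 0
  | step (s s' v : ℝ) (h : Ch f δ a b s v) (hs : s' ∈ Icc a b) (hlt : s < s') :
      Ch f δ a b s' (v + max (|f s' - f s| - δ) 0)

lemma Ch.mem {f : ℝ → ℝ} {δ a b s v : ℝ} (h : Ch f δ a b s v) : s ∈ Icc a b := by
  cases h <;> assumption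

lemma Ch.nonneg {f : ℝ → ℝ} {δ a b s v : ℝ} (h : Ch f δ a b s v) : 0 ≤ v := by
  induction h with
  | single s hs => exact le_rfl
  | step s s' v h hs hlt ih => positivity

lemma Ch.toFin {f : ℝ → ℝ} {δ a b s v : ℝ} (h : Ch f δ a b s v) :
    ∃ (n : ℕ) (t : Fin (n + 1) → ℝ), StrictMono t ∧ (∀ i, t i ∈ Set.Icc a b) ∧
      t (Fin.last n) = s ∧
      ∑ i : Fin n, ENNReal.ofReal (|f (t i.succ) - f (t i.castSucc)| - δ) = ENNReal.ofReal v := by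
  induction h with
  | single s hs =>
    refine ⟨0, fun _ => s, ?_, fun _ => hs, rfl, by simp⟩
    intro i j hij
    exact absurd hij (by have := i.2; have := j.2; omega)
  | step s s' v h hs hlt ih =>
    obtain ⟨n, t, hm, hmem, hl, hsum⟩ := ih
    refine ⟨n + 1, Fin.snoc t s', ?_, ?_, ?_, ?_⟩
    · rw [Fin.strictMono_iff_lt_succ]
      intro i
      refine Fin.lastCases ?_ ?_ i
      · rw [Fin.succ_last, Fin.snoc_last, Fin.snoc_castSucc, hl]; exact hlt
      · intro j
        rw [Fin.succ_castSucc, Fin.snoc_castSucc, Fin.snoc_castSucc]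
        exact hm j.castSucc_lt_succ
    · intro i
      refine Fin.lastCases ?_ ?_ i
      · rw [Fin.snoc_last]; exact hs
      · intro j; rw [Fin.snoc_castSucc]; exact hmem j
    · rw [Fin.snoc_last]
    · rw [Fin.sum_univ_castSucc]
      simp only [Fin.succ_castSucc, Fin.snoc_castSucc, Fin.succ_last, Fin.snoc_last]
      rw [hsum, hl, ENNReal.ofReal_add h.nonneg (le_max_right _ _)]
      congr 1
      rcases le_total (|f s' - f s| - δ) 0 with h0 | h0
      · rw [max_eq_right h0, ENNReal.ofReal_of_nonpos h0, ENNReal.ofReal_zero]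
      · rw [max_eq_left h0]

lemma Ch.le_truncVar {f : ℝ → ℝ} {δ a b s v : ℝ} (h : Ch f δ a b s v) :
    ENNReal.ofReal v ≤ truncVar f δ a b := by
  obtain ⟨n, t, hm, hmem, _, hsum⟩ := h.toFin
  rw [← hsum]
  unfold truncVar
  exact le_iSup₂_of_le n t (le_iSup₂_of_le hm hmem le_rfl)

lemma Ch.ofFin {f : ℝ → ℝ} {δ a b : ℝ} : ∀ (n : ℕ) (t : Fin (n + 1) → ℝ), StrictMono t →
    (∀ i, t i ∈ Set.Icc a b) → ∃ v, Ch f δ a b (t (Fin.last n)) v ∧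
      ∑ i : Fin n, ENNReal.ofReal (|f (t i.succ) - f (t i.castSucc)| - δ) = ENNReal.ofReal v := by
  intro n
  induction n with
  | zero => intro t _ hmem; exact ⟨0, Ch.single _ (hmem _), by simp⟩
  | succ n ih =>
    intro t hm hmem
    obtain ⟨v, hv, hsum⟩ := ih (fun i => t i.castSucc) (fun i j hij => hm (by simpa using hij))
      (fun i => hmem _)
    refine ⟨_, Ch.step _ (t (Fin.last (n+1))) v hv (hmem _) (hm (Fin.castSucc_lt_last _)), ?_⟩
    rw [Fin.sum_univ_castSucc, ENNReal.ofReal_add hv.nonneg (le_max_right _ _), ← hsum]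
    simp only [Fin.succ_castSucc, Fin.succ_last]
    congr 1
    rcases le_total (|f (t (Fin.last (n+1))) - f (t (Fin.last n).castSucc)| - δ) 0 with h0 | h0
    · rw [max_eq_right h0, ENNReal.ofReal_of_nonpos h0, ENNReal.ofReal_zero]
    · rw [max_eq_left h0]

lemma truncVar_le {f : ℝ → ℝ} {δ a b : ℝ} {C : ENNReal}
    (h : ∀ s v, Ch f δ a b s v → ENNReal.ofReal v ≤ C) : truncVar f δ a b ≤ C := by
  unfold truncVar
  refine iSup₂_le fun n t => iSup₂_le fun hm hmem => ?_
  obtain ⟨v, hv, hsum⟩ := Ch.ofFin (f := f) (δ := δ) n t hm hmem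
  rw [hsum]; exact h _ _ hv

lemma truncVar_anti {f : ℝ → ℝ} {δ δ' a b : ℝ} (h : δ ≤ δ') :
    truncVar f δ' a b ≤ truncVar f δ a b := by
  unfold truncVar
  gcongr

lemma Ch.mono {f : ℝ → ℝ} {δ u v w s x : ℝ} (hvw : v ≤ w) (h : Ch f δ u v s x) :
    Ch f δ u w s x := by
  induction h with
  | single s hs => exact .single s ⟨hs.1, hs.2.trans hvw⟩
  | step s s' v h hs hlt ih => exact .step s s' v ih ⟨hs.1, hs.2.trans hvw⟩ hlt

lemma Ch.concat {f : ℝ → ℝ} {δ u v w s s' x y : ℝ} (huv : u ≤ v) (hvw : v ≤ w)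
    (h : Ch f δ u v s x) (h2 : Ch f δ v w s' y) : ∃ z, x + y ≤ z ∧ Ch f δ u w s' z := by
  induction h2 with
  | single p hp =>
    rcases (h.mem.2.trans hp.1).eq_or_lt with he | hl
    · subst he; exact ⟨x, by simp, h.mono hvw⟩
    · refine ⟨_, ?_, Ch.step s p x (h.mono hvw) ⟨huv.trans hp.1, hp.2⟩ hl⟩
      have := le_max_right (|f p - f s| - δ) 0
      linarith
  | step p p' y h2 hp hlt ih =>
    obtain ⟨z, hz, hc⟩ := ih
    exact ⟨_, by linarith, Ch.step p p' z hc ⟨huv.trans hp.1, hp.2⟩ hlt⟩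

lemma truncVar_superadd {f : ℝ → ℝ} {δ u v w : ℝ} (huv : u ≤ v) (hvw : v ≤ w) :
    truncVar f δ u v + truncVar f δ v w ≤ truncVar f δ u w := by
  by_cases hC : truncVar f δ u w = ⊤
  · rw [hC]; exact le_top
  have key : ∀ s x, Ch f δ u v s x → ENNReal.ofReal x + truncVar f δ v w ≤ truncVar f δ u w := by
    intro s x hx
    have hle : ENNReal.ofReal x ≤ truncVar f δ u w := (hx.mono hvw).le_truncVar
    have : truncVar f δ v w ≤ truncVar f δ u w - ENNReal.ofReal x := by
      apply truncVar_le
      intro s' y hy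
      obtain ⟨z, hz, hc⟩ := hx.concat huv hvw hy
      apply ENNReal.le_sub_of_add_le_left ENNReal.ofReal_ne_top
      rw [← ENNReal.ofReal_add hx.nonneg hy.nonneg]
      exact (ENNReal.ofReal_le_ofReal hz).trans hc.le_truncVar
    calc _ ≤ ENNReal.ofReal x + (truncVar f δ u w - ENNReal.ofReal x) := by gcongr
      _ = _ := add_tsub_cancel_of_le hle
  have hB : truncVar f δ v w ≤ truncVar f δ u w := by
    have := key u 0 (Ch.single u ⟨le_rfl, huv⟩)
    simpa using this
  have : truncVar f δ u v ≤ truncVar f δ u w - truncVar f δ v w := by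
    apply truncVar_le
    intro s x hx
    exact ENNReal.le_sub_of_add_le_right (ne_top_of_le_ne_top hC hB) (key s x hx)
  calc _ ≤ (truncVar f δ u w - truncVar f δ v w) + truncVar f δ v w := by gcongr
    _ = _ := tsub_add_cancel_of_le hB

/-- chain value at least `y` when virtually extended by value `x` -/
def Wge (f : ℝ → ℝ) (δ a b p x y : ℝ) : Prop :=
  ∃ s v, s ≤ p ∧ Ch f δ a b s v ∧ y ≤ v + max (|x - f s| - δ) 0

lemma Wge.mono {f : ℝ → ℝ} {δ a b p q x y : ℝ} (h : Wge f δ a b p x y) (hpq : p ≤ q) :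
    Wge f δ a b q x y := by
  obtain ⟨s, v, hs, hc, hy⟩ := h
  exact ⟨s, v, hs.trans hpq, hc, hy⟩

lemma Wge.step {f : ℝ → ℝ} {δ a b p q x y : ℝ} (h : Wge f δ a b p (f q) y) (hpq : p < q)
    (hq : q ∈ Icc a b) : Wge f δ a b q x (y + max (|x - f q| - δ) 0) := by
  obtain ⟨s, v, hs, hc, hy⟩ := h
  exact ⟨q, _, le_rfl, Ch.step s q v hc hq (hs.trans_lt hpq), by linarith⟩

lemma approx_aux (f : ℝ → ℝ) (r a b : ℝ) (hr : 0 ≤ r) (X : ℕ → ℝ) (n : ℕ)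
    (hX : ∀ i ≤ n, X i ∈ Icc a b) (hm : ∀ i < n, X i ≤ X (i+1)) :
    ∃ lo hi T : ℝ, lo ≤ hi ∧ f (X n) - r ≤ lo ∧ hi ≤ f (X n) + r ∧
      (∀ c, lo ≤ c → c ≤ hi → ∃ H : ℕ → ℝ, H n = c ∧ (∀ i ≤ n, |f (X i) - H i| ≤ r) ∧
        ∑ i ∈ Finset.range n, |H (i+1) - H i| ≤ T) ∧
      (∀ x, Wge f (2*r) a b (X n) x T) ∧
      (∀ x, Wge f (2*r) a b (X n) x (T + (x - hi - r))) ∧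
      (∀ x, Wge f (2*r) a b (X n) x (T + (lo - r - x))) := by
  induction n with
  | zero =>
    have hc := Ch.single (f := f) (δ := 2*r) _ (hX 0 le_rfl)
    refine ⟨f (X 0) - r, f (X 0) + r, 0, by linarith, le_rfl, le_rfl, ?_, ?_, ?_, ?_⟩
    · intro c h1 h2
      refine ⟨fun _ => c, rfl, ?_, by simp⟩
      intro i hi
      obtain rfl : i = 0 := by omega
      rw [abs_le]; constructor <;> linarith
    · intro x
      exact ⟨_, _, le_rfl, hc, by simp⟩
    · intro x
      refine ⟨_, _, le_rfl, hc, ?_⟩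
      have := le_max_left (|x - f (X 0)| - 2*r) 0
      have := le_abs_self (x - f (X 0))
      linarith
    · intro x
      refine ⟨_, _, le_rfl, hc, ?_⟩
      have := le_max_left (|x - f (X 0)| - 2*r) 0
      have := neg_le_abs (x - f (X 0))
      linarith
  | succ n ih =>
    obtain ⟨lo, hi, T, hlh, hlo, hhi, hH, h0, h1, h2⟩ :=
      ih (fun i hi => hX i (by omega)) (fun i hi => hm i (by omega))
    have hle := hm n (by omega)
    -- extension of H
    have ext : ∀ c c' T', lo ≤ c → c ≤ hi → |f (X (n+1)) - c'| ≤ r → T + |c' - c| ≤ T' →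
        ∃ H : ℕ → ℝ, H (n+1) = c' ∧ (∀ i ≤ n+1, |f (X i) - H i| ≤ r) ∧
        ∑ i ∈ Finset.range (n+1), |H (i+1) - H i| ≤ T' := by
      intro c c' T' hc1 hc2 hc' hT
      obtain ⟨H, hHn, hHr, hHs⟩ := hH c hc1 hc2
      refine ⟨fun i => if i ≤ n then H i else c', by simp, ?_, ?_⟩
      · intro i hi
        by_cases h : i ≤ n
        · simp only [h, if_true]; exact hHr i h
        · obtain rfl : i = n + 1 := by omega
          simpa using hc'
      · rw [Finset.sum_range_succ]
        have e : ∑ i ∈ Finset.range n, |(if i + 1 ≤ n then H (i+1) else c') - (if i ≤ n then H i else c')|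
            = ∑ i ∈ Finset.range n, |H (i+1) - H i| := by
          apply Finset.sum_congr rfl
          intro i hi
          rw [Finset.mem_range] at hi
          rw [if_pos (by omega), if_pos (by omega)]
        rw [e]
        simp only [le_refl, if_true, hHn]
        rw [if_neg (by omega)]
        linarith
    rcases hle.eq_or_lt with heq | hlt
    · refine ⟨lo, hi, T, hlh, heq ▸ hlo, heq ▸ hhi, ?_, heq ▸ h0, heq ▸ h1, heq ▸ h2⟩
      intro c hc1 hc2
      refine ext c c T hc1 hc2 ?_ (by simp)
      rw [← heq, abs_le]; constructor <;> linarith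
    · have hq := hX (n+1) le_rfl
      set F := f (X (n+1)) with hF
      have st := fun y x => (fun h => Wge.step (x := x) (y := y) h hlt hq :
        Wge f (2*r) a b (X n) F y → _)
      have wk : ∀ {x y y'}, Wge f (2*r) a b (X (n+1)) x y → y' ≤ y →
          Wge f (2*r) a b (X (n+1)) x y' := by
        rintro x y y' ⟨s, v, hs, hc, hy⟩ hyy
        exact ⟨s, v, hs, hc, hyy.trans hy⟩
      have A1 : ∀ x, x - F - 2*r ≤ max (|x - F| - 2*r) 0 := fun x =>
        le_trans (by linarith [le_abs_self (x - F)]) (le_max_left _ _)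
      have A2 : ∀ x, F - x - 2*r ≤ max (|x - F| - 2*r) 0 := fun x =>
        le_trans (by linarith [neg_le_abs (x - F)]) (le_max_left _ _)
      have A0 : ∀ x, 0 ≤ max (|x - F| - 2*r) 0 := fun x => le_max_right _ _
      by_cases c1 : hi < F - r
      · refine ⟨F - r, F - r, T + (F - r - hi), le_rfl, le_rfl, by linarith, ?_, ?_, ?_, ?_⟩
        · intro c hc1 hc2
          obtain rfl : c = F - r := le_antisymm hc2 hc1
          refine ext hi (F - r) _ hlh le_rfl ?_ ?_
          · rw [abs_le]; constructor <;> linarith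
          · rw [abs_of_nonneg (by linarith)]
        · intro x
          exact wk (st _ x (h1 F)) (by linarith [A0 x])
        · intro x
          exact wk ((h1 x).mono hle) (by linarith)
        · intro x
          exact wk (st _ x (h1 F)) (by linarith [A2 x])
      by_cases c2 : F + r < lo
      · refine ⟨F + r, F + r, T + (lo - (F + r)), le_rfl, by linarith, le_rfl, ?_, ?_, ?_, ?_⟩
        · intro c hc1 hc2
          obtain rfl : c = F + r := le_antisymm hc2 hc1
          refine ext lo (F + r) _ le_rfl hlh ?_ ?_
          · rw [abs_le]; constructor <;> linarith
          · rw [abs_of_nonpos (by linarith)]; linarith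
        · intro x
          exact wk (st _ x (h2 F)) (by linarith [A0 x])
        · intro x
          exact wk (st _ x (h2 F)) (by linarith [A1 x])
        · intro x
          exact wk ((h2 x).mono hle) (by linarith)
      push Not at c1 c2
      refine ⟨max lo (F - r), min hi (F + r), T, ?_, le_max_right _ _, min_le_right _ _, ?_, ?_, ?_, ?_⟩
      · exact max_le (le_min hlh c2) (le_min c1 (by linarith))
      · intro c hc1 hc2
        rw [max_le_iff] at hc1
        rw [le_min_iff] at hc2
        refine ext c c _ hc1.1 hc2.1 ?_ (by simp)
        rw [abs_le]; constructor <;> linarith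
      · intro x; exact (h0 x).mono hle
      · intro x
        rcases min_choice hi (F + r) with h | h <;> rw [h]
        · exact (h1 x).mono hle
        · exact wk (st _ x (h0 F)) (by linarith [A1 x])
      · intro x
        rcases max_choice lo (F - r) with h | h <;> rw [h]
        · exact (h2 x).mono hle
        · exact wk (st _ x (h0 F)) (by linarith [A2 x])

lemma approx (f : ℝ → ℝ) (δ a b : ℝ) (hδ : 0 ≤ δ) (X : ℕ → ℝ) (n : ℕ)
    (hX : ∀ i ≤ n, X i ∈ Icc a b) (hm : ∀ i < n, X i ≤ X (i+1)) :
    ∃ H : ℕ → ℝ, (∀ i ≤ n, |f (X i) - H i| ≤ δ / 2) ∧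
      ENNReal.ofReal (∑ i ∈ Finset.range n, |H (i+1) - H i|) ≤ truncVar f δ a b := by
  obtain ⟨lo, hi, T, hlh, hlo, hhi, hH, h0, -, -⟩ := approx_aux f (δ/2) a b (by linarith) X n hX hm
  obtain ⟨H, -, hHr, hHs⟩ := hH lo le_rfl hlh
  refine ⟨H, hHr, (ENNReal.ofReal_le_ofReal hHs).trans ?_⟩
  obtain ⟨s, v, hs, hc, hy⟩ := h0 (f (X n))
  rw [show 2 * (δ / 2) = δ by ring] at hc hy
  rcases hs.eq_or_lt with he | hl
  · subst he
    have : max (|f (X n) - f (X n)| - δ) 0 = 0 := by simp [hδ]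
    rw [this, add_zero] at hy
    exact (ENNReal.ofReal_le_ofReal hy).trans hc.le_truncVar
  · exact (ENNReal.ofReal_le_ofReal hy).trans (Ch.step _ _ _ hc (hX n le_rfl) hl).le_truncVar

def BB (n : ℕ) (F G : ℕ → ℝ) : ℝ := ∑ i ∈ Finset.range n, F (i+1) * (G (i+1) - G i)

def tv (n : ℕ) (F : ℕ → ℝ) : ℝ := ∑ i ∈ Finset.range n, |F (i+1) - F i|

lemma tv_nonneg (n : ℕ) (F : ℕ → ℝ) : 0 ≤ tv n F := Finset.sum_nonneg fun _ _ => abs_nonneg _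

lemma tv_sub_le (n : ℕ) (F G : ℕ → ℝ) : tv n (F - G) ≤ tv n F + tv n G := by
  unfold tv
  rw [← Finset.sum_add_distrib]
  apply Finset.sum_le_sum
  intro i _
  have := abs_sub (F (i+1) - F i) (G (i+1) - G i)
  simp only [Pi.sub_apply]
  rw [show F (i+1) - G (i+1) - (F i - G i) = (F (i+1) - F i) - (G (i+1) - G i) by ring]
  exact this

lemma BB_bound_left (n : ℕ) (F G : ℕ → ℝ) (α : ℝ) (h : ∀ i ≤ n, |F i| ≤ α) :
    |BB n F G| ≤ α * tv n G := by
  unfold BB tv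
  rw [Finset.mul_sum]
  refine (Finset.abs_sum_le_sum_abs _ _).trans (Finset.sum_le_sum ?_)
  intro i hi
  rw [Finset.mem_range] at hi
  rw [abs_mul]
  exact mul_le_mul_of_nonneg_right (h _ (by omega)) (abs_nonneg _)

lemma BB_bound_right (n : ℕ) (F G : ℕ → ℝ) (α : ℝ) (h : ∀ i ≤ n, |G i| ≤ α)
    (hF : F 0 = 0) (hG : G n = 0) :
    |BB n F G| ≤ α * tv n F := by
  have e : BB n F G = - ∑ i ∈ Finset.range n, (F (i+1) - F i) * G i := by
    have h1 := Finset.sum_range_sub (fun i => F i * G i) n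
    rw [hF, hG] at h1
    rw [eq_neg_iff_add_eq_zero]
    unfold BB
    rw [← Finset.sum_add_distrib]
    calc _ = ∑ i ∈ Finset.range n, (F (i+1) * G (i+1) - F i * G i) := by
          apply Finset.sum_congr rfl; intro i _; ring
      _ = 0 := by rw [h1]; ring
  rw [e, abs_neg]
  unfold tv
  rw [Finset.mul_sum]
  refine (Finset.abs_sum_le_sum_abs _ _).trans (Finset.sum_le_sum ?_)
  intro i hi
  rw [Finset.mem_range] at hi
  rw [abs_mul, mul_comm]
  exact mul_le_mul_of_nonneg_right (h _ (by omega)) (abs_nonneg _)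

lemma BB_sub_left (n : ℕ) (F F' G : ℕ → ℝ) : BB n (F - F') G = BB n F G - BB n F' G := by
  unfold BB
  rw [← Finset.sum_sub_distrib]
  apply Finset.sum_congr rfl; intro i _; simp only [Pi.sub_apply]; ring

lemma BB_sub_right (n : ℕ) (F G G' : ℕ → ℝ) : BB n F (G - G') = BB n F G - BB n F G' := by
  unfold BB
  rw [← Finset.sum_sub_distrib]
  apply Finset.sum_congr rfl; intro i _; simp only [Pi.sub_apply]; ring

lemma chain_bound (e m l : ℕ → ℝ) (h : ∀ k, e k = m k + l k + e (k+1))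
    (he : Tendsto e atTop (nhds 0)) :
    ENNReal.ofReal |e 0| ≤ ∑' k, ENNReal.ofReal |m k| + ∑' k, ENNReal.ofReal |l k| := by
  have h1 : ∀ K, ENNReal.ofReal |e 0| ≤ ∑ k ∈ Finset.range K, ENNReal.ofReal |m k| +
      ∑ k ∈ Finset.range K, ENNReal.ofReal |l k| + ENNReal.ofReal |e K| := by
    intro K
    induction K with
    | zero => simp
    | succ K ih =>
      refine ih.trans ?_
      have : ENNReal.ofReal |e K| ≤ ENNReal.ofReal |m K| + ENNReal.ofReal |l K|
          + ENNReal.ofReal |e (K+1)| := by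
        rw [← ENNReal.ofReal_add (by positivity) (by positivity),
          ← ENNReal.ofReal_add (by positivity) (by positivity)]
        apply ENNReal.ofReal_le_ofReal
        rw [h K]
        exact abs_add_three _ _ _
      rw [Finset.sum_range_succ, Finset.sum_range_succ]
      calc _ ≤ _ := add_le_add le_rfl this
        _ = _ := by ring
  have h2 : ∀ K, ENNReal.ofReal |e 0| ≤ ∑' k, ENNReal.ofReal |m k| + ∑' k, ENNReal.ofReal |l k|
      + ENNReal.ofReal |e K| := fun K => (h1 K).trans
    (add_le_add (add_le_add (ENNReal.sum_le_tsum _) (ENNReal.sum_le_tsum _)) le_rfl)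
  have h3 : Tendsto (fun K => ENNReal.ofReal |e K|) atTop (nhds 0) := by
    have := ENNReal.tendsto_ofReal he.abs
    simpa using this
  have h4 := h3.const_add (∑' k, ENNReal.ofReal |m k| + ∑' k, ENNReal.ofReal |l k|)
  rw [add_zero] at h4
  exact ge_of_tendsto' h4 h2

lemma approx_family (f : ℝ → ℝ) (η : ℕ → ℝ) (hη : ∀ k, 0 ≤ η k) (ha : Antitone η) (a b : ℝ)
    (X : ℕ → ℝ) (n : ℕ) (hX : ∀ i ≤ n, X i ∈ Icc a b) (hm : ∀ i < n, X i ≤ X (i+1))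
    (j : ℕ) (hj : j ≤ n) :
    ∃ P : ℕ → ℕ → ℝ, (∀ i, P 0 i = f (X j)) ∧ (∀ k, P k j = f (X j)) ∧
      (∀ k, ∀ i ≤ n, |f (X i) - P (k+1) i| ≤ η k) ∧
      ∀ k, ENNReal.ofReal (tv n (P (k+1) - P k)) ≤ 2 ^ k * truncVar f (η k) a b := by
  choose H hH1 hH2 using fun k => approx f (η k) a b (hη k) X n hX hm
  let P : ℕ → ℕ → ℝ := fun k => match k with
    | 0 => fun _ => f (X j)
    | k+1 => fun i => H k i + (f (X j) - H k j)
  have tvP : ∀ k, ENNReal.ofReal (tv n (P (k+1))) ≤ truncVar f (η k) a b := by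
    intro k
    refine le_trans (le_of_eq ?_) (hH2 k)
    congr 1
    apply Finset.sum_congr rfl
    intro i _
    simp only [P]
    congr 1; ring
  refine ⟨P, fun i => rfl, ?_, ?_, ?_⟩
  · intro k
    cases k with
    | zero => rfl
    | succ k => simp [P]
  · intro k i hi
    have h1 := hH1 k i hi
    have h2 := hH1 k j hj
    simp only [P]
    rw [abs_le] at *
    constructor <;> linarith
  · intro k
    cases k with
    | zero =>
      refine le_trans (ENNReal.ofReal_le_ofReal (tv_sub_le _ _ _)) ?_
      have : tv n (P 0) = 0 := by simp [tv, P]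
      rw [this, add_zero, pow_zero, one_mul]
      exact tvP 0
    | succ k =>
      refine le_trans (ENNReal.ofReal_le_ofReal (tv_sub_le _ _ _)) ?_
      rw [ENNReal.ofReal_add (tv_nonneg _ _) (tv_nonneg _ _)]
      have h1 := tvP (k+1)
      have h2 := (tvP k).trans (truncVar_anti (f := f) (a := a) (b := b) (ha (Nat.le_succ k)))
      calc _ ≤ truncVar f (η (k+1)) a b + truncVar f (η (k+1)) a b := add_le_add h1 h2
        _ = 2 ^ 1 * truncVar f (η (k+1)) a b := by rw [pow_one, two_mul]
        _ ≤ _ := by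
          gcongr
          · norm_num
          · omega

noncomputable def Phi (f g : ℝ → ℝ) (η θ : ℕ → ℝ) (m a b : ℝ) : ENNReal :=
  (∑' k : ℕ, ENNReal.ofReal ((2 : ℝ) ^ k * (if k = 0 then m else η (k - 1))) *
            truncVar g (θ k) a b)
        + ∑' k : ℕ, ENNReal.ofReal ((2 : ℝ) ^ k * θ k) * truncVar f (η k) a b

lemma term_bound {x α t : ℝ} {k : ℕ} {V : ENNReal} (h : |x| ≤ α * t) (hα : 0 ≤ α)
    (ht : ENNReal.ofReal t ≤ 2 ^ k * V) :
    ENNReal.ofReal |x| ≤ ENNReal.ofReal ((2:ℝ)^k * α) * V := by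
  calc _ ≤ ENNReal.ofReal (α * t) := ENNReal.ofReal_le_ofReal h
    _ = ENNReal.ofReal α * ENNReal.ofReal t := ENNReal.ofReal_mul hα
    _ ≤ ENNReal.ofReal α * (2 ^ k * V) := by gcongr
    _ = _ := by
      rw [ENNReal.ofReal_mul (by positivity), ENNReal.ofReal_pow (by norm_num)]
      simp only [ENNReal.ofReal_ofNat]
      ring

lemma est_seq (f g : ℝ → ℝ) (η θ : ℕ → ℝ) (hη : ∀ k, 0 ≤ η k) (hθ : ∀ k, 0 ≤ θ k)
    (hηa : Antitone η) (hθa : Antitone θ)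
    (hηl : Tendsto η atTop (nhds 0)) (hθl : Tendsto θ atTop (nhds 0)) (a b m : ℝ) (hm0 : 0 ≤ m)
    (n : ℕ) (X t : ℕ → ℝ) (hX : ∀ i ≤ n, X i ∈ Icc a b) (hXm : ∀ i < n, X i ≤ X (i+1))
    (ht : ∀ i ≤ n, t i ∈ Icc a b) (htm : ∀ i < n, t i ≤ t (i+1)) :
    ((∀ i ≤ n, |f (X i) - f (X 0)| ≤ m) →
      ENNReal.ofReal |BB n (fun i => f (X i) - f (X 0)) (fun i => g (t i) - g (t n))|
      ≤ Phi f g η θ m a b) ∧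
    ((∀ i ≤ n, |g (t i) - g (t n)| ≤ m) →
      ENNReal.ofReal |BB n (fun i => f (X i) - f (X 0)) (fun i => g (t i) - g (t n))|
      ≤ Phi g f θ η m a b) := by
  obtain ⟨P, P0, Pj, Pa, Pt⟩ := approx_family f η hη hηa a b X n hX hXm 0 (Nat.zero_le _)
  obtain ⟨Q, Q0, Qj, Qa, Qt⟩ := approx_family g θ hθ hθa a b t n ht htm n le_rfl
  set F : ℕ → ℝ := fun i => f (X i) with hF
  set G : ℕ → ℝ := fun i => g (t i) with hG
  have hF0 : (fun i => f (X i) - f (X 0)) = F - P 0 := by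
    funext i; simp [hF, P0]
  have hG0 : (fun i => g (t i) - g (t n)) = G - Q 0 := by
    funext i; simp [hG, Q0]
  rw [hF0, hG0]
  let e : ℕ → ℝ := fun k => BB n (F - P k) (G - Q k)
  have he : Tendsto e atTop (nhds 0) := by
    rw [← tendsto_add_atTop_iff_nat 1]
    have hb : ∀ k, |e (k+1)| ≤ η k * (n * (2 * θ k)) := by
      intro k
      refine (BB_bound_left n _ _ (η k) (Pa k)).trans ?_
      refine mul_le_mul_of_nonneg_left ?_ (hη k)
      unfold tv
      calc _ ≤ ∑ i ∈ Finset.range n, 2 * θ k := by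
            apply Finset.sum_le_sum
            intro i hi
            rw [Finset.mem_range] at hi
            have h1 := Qa k i (by omega)
            have h2 := Qa k (i+1) (by omega)
            simp only [Pi.sub_apply, hG]
            rw [abs_le] at *
            constructor <;> linarith
        _ = _ := by simp
    refine squeeze_zero_norm hb ?_
    have := hηl.mul ((hθl.const_mul 2).const_mul (n:ℝ))
    simpa using this
  have z1 : ∀ k, (F - P k) 0 = 0 := fun k => by simp [hF, Pj]
  have z2 : ∀ k, (P (k+1) - P k) 0 = 0 := fun k => by simp [Pj]
  have z3 : ∀ k, (G - Q k) n = 0 := fun k => by simp [hG, Qj]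
  have z4 : ∀ k, (Q (k+1) - Q k) n = 0 := fun k => by simp [Qj]
  constructor
  · intro hm
    refine (chain_bound e (fun k => BB n (F - P k) (Q (k+1) - Q k))
      (fun k => BB n (P (k+1) - P k) (G - Q (k+1))) ?_ he).trans ?_
    · intro k
      simp only [e, BB_sub_left, BB_sub_right]; ring
    · unfold Phi
      refine add_le_add (ENNReal.tsum_le_tsum fun k => ?_) (ENNReal.tsum_le_tsum fun k => ?_)
      · refine term_bound (BB_bound_left n _ _ _ ?_) ?_ (Qt k)
        · intro i hi
          cases k with
          | zero => simpa [P0, hF] using hm i hi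
          | succ k => simpa [hF] using Pa k i hi
        · split_ifs
          · exact hm0
          · exact hη _
      · exact term_bound (BB_bound_right n _ _ _ (Qa k) (z2 k) (z3 _)) (hθ k) (Pt k)
  · intro hm
    refine (chain_bound e (fun k => BB n (P (k+1) - P k) (G - Q k))
      (fun k => BB n (F - P (k+1)) (Q (k+1) - Q k)) ?_ he).trans ?_
    · intro k
      simp only [e, BB_sub_left, BB_sub_right]; ring
    · unfold Phi
      refine add_le_add (ENNReal.tsum_le_tsum fun k => ?_) (ENNReal.tsum_le_tsum fun k => ?_)
      · refine term_bound (BB_bound_right n _ _ _ ?_ (z2 k) (z3 k)) ?_ (Pt k)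
        · intro i hi
          cases k with
          | zero => simpa [Q0, hG] using hm i hi
          | succ k => simpa [hG] using Qa k i hi
        · split_ifs
          · exact hm0
          · exact hθ _
      · exact term_bound (BB_bound_left n _ _ _ (Pa k)) (hη k) (Qt k)

/-- Riemann sums -/
inductive RS (f g : ℝ → ℝ) (δ u : ℝ) : ℝ → ℝ → Prop
  | nil : RS f g δ u u 0
  | cons (v w R ξ : ℝ) (h : RS f g δ u v R) (hvw : v < w) (hd : w - v < δ) (h1 : v ≤ ξ)
      (h2 : ξ ≤ w) : RS f g δ u w (R + f ξ * (g w - g v))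

lemma RS.le {f g : ℝ → ℝ} {δ u w R : ℝ} (h : RS f g δ u w R) : u ≤ w := by
  induction h with
  | nil => exact le_rfl
  | cons v w R ξ h hvw hd h1 h2 ih => exact ih.trans hvw.le

lemma RS.mono {f g : ℝ → ℝ} {δ δ' u w R : ℝ} (hδ : δ ≤ δ') (h : RS f g δ u w R) :
    RS f g δ' u w R := by
  induction h with
  | nil => exact .nil
  | cons v w R ξ h hvw hd h1 h2 ih => exact .cons v w R ξ ih hvw (hd.trans_le hδ) h1 h2

lemma RS.toSeq {f g : ℝ → ℝ} {δ u w R : ℝ} (h : RS f g δ u w R) :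
    ∃ (n : ℕ) (X t : ℕ → ℝ), X 0 = u ∧ t 0 = u ∧ t n = w ∧ X n ≤ w ∧
      (∀ i < n, X i ≤ X (i+1)) ∧ (∀ i < n, t i ≤ t (i+1)) ∧
      R = ∑ i ∈ Finset.range n, f (X (i+1)) * (g (t (i+1)) - g (t i)) := by
  induction h with
  | nil => exact ⟨0, fun _ => u, fun _ => u, rfl, rfl, rfl, le_rfl, by simp, by simp, by simp⟩
  | cons v w R ξ h hvw hd h1 h2 ih =>
    obtain ⟨n, X, t, hX0, ht0, htn, hXn, hXm, htm, hR⟩ := ih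
    refine ⟨n+1, fun i => if i ≤ n then X i else ξ, fun i => if i ≤ n then t i else w,
      by simpa using hX0, by simpa using ht0, by simp, by simpa using h2, ?_, ?_, ?_⟩
    · intro i hi
      rcases Nat.lt_succ_iff_lt_or_eq.mp hi with h | rfl
      · simp only [h.le, Nat.succ_le_of_lt h, if_true]; exact hXm i h
      · simp; exact hXn.trans h1
    · intro i hi
      rcases Nat.lt_succ_iff_lt_or_eq.mp hi with h | rfl
      · simp only [h.le, Nat.succ_le_of_lt h, if_true]; exact htm i h
      · simp; rw [htn]; exact hvw.le
    · rw [Finset.sum_range_succ, hR]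
      congr 1
      · apply Finset.sum_congr rfl
        intro i hi
        rw [Finset.mem_range] at hi
        simp only [hi.le, Nat.succ_le_of_lt hi, if_true]
      · simp [htn]

lemma seq_mono (n : ℕ) (X : ℕ → ℝ) (h : ∀ i < n, X i ≤ X (i+1)) :
    ∀ i j, i ≤ j → j ≤ n → X i ≤ X j := by
  intro i j hij
  induction hij with
  | refl => intro _; exact le_rfl
  | step hij ih => intro hj; exact (ih (by omega)).trans (h _ (by omega))

lemma est_RS (f g : ℝ → ℝ) (η θ : ℕ → ℝ) (hη : ∀ k, 0 ≤ η k) (hθ : ∀ k, 0 ≤ θ k)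
    (hηa : Antitone η) (hθa : Antitone θ)
    (hηl : Tendsto η atTop (nhds 0)) (hθl : Tendsto θ atTop (nhds 0)) (u w m δ R : ℝ) (hm0 : 0 ≤ m)
    (h : RS f g δ u w R) :
    ((∀ x ∈ Icc u w, |f x - f u| ≤ m) →
      ENNReal.ofReal |R - f u * (g w - g u)| ≤ Phi f g η θ m u w) ∧
    ((∀ x ∈ Icc u w, |g w - g x| ≤ m) →
      ENNReal.ofReal |R - f u * (g w - g u)| ≤ Phi g f θ η m u w) := by
  obtain ⟨n, X, t, hX0, ht0, htn, hXn, hXm, htm, hR⟩ := h.toSeq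
  have hX : ∀ i ≤ n, X i ∈ Icc u w := fun i hi =>
    ⟨hX0 ▸ seq_mono n X hXm 0 i (Nat.zero_le _) hi, (seq_mono n X hXm i n hi le_rfl).trans hXn⟩
  have ht : ∀ i ≤ n, t i ∈ Icc u w := fun i hi =>
    ⟨ht0 ▸ seq_mono n t htm 0 i (Nat.zero_le _) hi, htn ▸ seq_mono n t htm i n hi le_rfl⟩
  have key := est_seq f g η θ hη hθ hηa hθa hηl hθl u w m hm0 n X t hX hXm ht htm
  have e : BB n (fun i => f (X i) - f (X 0)) (fun i => g (t i) - g (t n))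
      = R - f u * (g w - g u) := by
    have := Finset.sum_range_sub (fun i => g (t i)) n
    simp only [htn, ht0] at this
    rw [hR, ← this, Finset.mul_sum, ← Finset.sum_sub_distrib]
    unfold BB
    apply Finset.sum_congr rfl; intro i _; rw [hX0]; ring
  rw [e, hX0, htn] at key
  refine ⟨fun hm => key.1 fun i hi => hm _ (hX i hi), fun hm => key.2 fun i hi => ?_⟩
  rw [abs_sub_comm]; exact hm _ (ht i hi)

lemma RS.split {f g : ℝ → ℝ} {δ a b u w R v e : ℝ} (he0 : 0 ≤ e) (hau : a ≤ u)
    (he : ∀ p ξ q, a ≤ p → q ≤ b → p ≤ v → v ≤ q → q - p < δ → p ≤ ξ → ξ ≤ q →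
      |(f ξ - f v) * (g q - g p)| ≤ e) (huv : u ≤ v)
    (h : RS f g δ u w R) : w ≤ b → v ≤ w →
    ∃ R1 R2, RS f g δ u v R1 ∧ RS f g δ v w R2 ∧ |R - (R1 + R2)| ≤ e := by
  induction h with
  | nil =>
    intro _ hvw
    obtain rfl : u = v := le_antisymm huv hvw
    exact ⟨0, 0, .nil, .nil, by simpa using he0⟩
  | cons p w R ξ h hpw hd h1 h2 ih =>
    intro hwb hvw
    rcases le_or_gt v p with hvp | hpv
    · obtain ⟨R1, R2, hR1, hR2, hR⟩ := ih (hpw.le.trans hwb) hvp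
      refine ⟨R1, _, hR1, .cons p w R2 ξ hR2 hpw hd h1 h2, ?_⟩
      rw [show R + f ξ * (g w - g p) - (R1 + (R2 + f ξ * (g w - g p))) = R - (R1 + R2) by ring]
      exact hR
    · have hb := he p ξ w (hau.trans h.le) hwb hpv.le hvw hd h1 h2
      have c1 : RS f g δ u v (R + f v * (g v - g p)) :=
        .cons p v R v h hpv (by linarith) hpv.le le_rfl
      have c2 : RS f g δ v w (f v * (g w - g v)) := by
        rcases hvw.eq_or_lt with rfl | hlt
        · simpa using RS.nil
        · have := RS.cons (f := f) (g := g) (δ := δ) (u := v) v w 0 v .nil hlt (by linarith)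
            le_rfl hvw
          simpa using this
      refine ⟨_, _, c1, c2, ?_⟩
      rw [show R + f ξ * (g w - g p) - (R + f v * (g v - g p) + f v * (g w - g v))
        = (f ξ - f v) * (g w - g p) by ring]
      exact hb

lemma RS.self {f g : ℝ → ℝ} {δ u w R : ℝ} (h : RS f g δ u w R) (hw : w = u) : R = 0 := by
  cases h with
  | nil => rfl
  | cons v w R ξ h hvw hd h1 h2 => have := h.le; linarith

lemma RS.head {f g : ℝ → ℝ} {δ u w R : ℝ} (h : RS f g δ u w R) : u < w →
    ∃ p ξ R2, u < p ∧ p ≤ w ∧ p - u < δ ∧ u ≤ ξ ∧ ξ ≤ p ∧ RS f g δ p w R2 ∧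
      R = f ξ * (g p - g u) + R2 := by
  induction h with
  | nil => intro h; exact absurd h (lt_irrefl _)
  | cons v w R ξ h hvw hd h1 h2 ih =>
    intro huw
    rcases h.le.eq_or_lt with he | hlt
    · have := h.self he.symm
      subst he
      exact ⟨w, ξ, 0, hvw, le_rfl, hd, h1, h2, .nil, by rw [this]; ring⟩
    · obtain ⟨p, ζ, R2, a1, a2, a3, a4, a5, a6, a7⟩ := ih hlt
      exact ⟨p, ζ, _, a1, a2.trans hvw.le, a3, a4, a5, .cons v w R2 ξ a6 hvw hd h1 h2,
        by rw [a7]; ring⟩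

lemma RS.tail {f g : ℝ → ℝ} {δ u w R : ℝ} (h : RS f g δ u w R) (huw : u < w) :
    ∃ p ξ R1, u ≤ p ∧ p < w ∧ w - p < δ ∧ p ≤ ξ ∧ ξ ≤ w ∧ RS f g δ u p R1 ∧
      R = R1 + f ξ * (g w - g p) := by
  cases h with
  | nil => exact absurd huw (lt_irrefl _)
  | cons v w R ξ h hvw hd h1 h2 => exact ⟨v, ξ, R, h.le, hvw, hd, h1, h2, h, rfl⟩

lemma RS.exists (f g : ℝ → ℝ) {δ : ℝ} (hδ : 0 < δ) {u w : ℝ} (huw : u ≤ w) :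
    ∃ R, RS f g δ u w R := by
  have key : ∀ n : ℕ, ∀ w, u ≤ w → w - u ≤ n * (δ / 2) → ∃ R, RS f g δ u w R := by
    intro n
    induction n with
    | zero =>
      intro w h1 h2
      obtain rfl : u = w := by simp at h2; linarith
      exact ⟨0, .nil⟩
    | succ n ih =>
      intro w h1 h2
      push_cast at h2
      rcases le_or_gt (w - u) (n * (δ/2)) with h | h
      · exact ih w h1 h
      · have hn : (0:ℝ) ≤ n * (δ/2) := by positivity
        obtain ⟨R, hR⟩ := ih (u + n * (δ/2)) (by linarith) (by linarith)
        exact ⟨_, .cons _ w R w hR (by linarith) (by linarith) (by linarith) le_rfl⟩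
  obtain ⟨n, hn⟩ := exists_nat_ge ((w - u) / (δ/2))
  exact key n w huw (by rwa [div_le_iff₀ (by linarith)] at hn)

lemma RS.ofFin (f g : ℝ → ℝ) (δ : ℝ) : ∀ (n : ℕ) (t : Fin (n + 1) → ℝ) (ξ : Fin n → ℝ),
    StrictMono t → (∀ i : Fin n, t i.castSucc ≤ ξ i ∧ ξ i ≤ t i.succ) →
    (∀ i : Fin n, t i.succ - t i.castSucc < δ) →
    RS f g δ (t 0) (t (Fin.last n)) (∑ i : Fin n, f (ξ i) * (g (t i.succ) - g (t i.castSucc))) := by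
  intro n
  induction n with
  | zero => intro t ξ _ _ _; simpa using RS.nil
  | succ n ih =>
    intro t ξ hm hξ hd
    have h := ih (fun i => t i.castSucc) (fun i => ξ i.castSucc)
      (fun i j hij => hm (by simpa using hij)) (fun i => hξ i.castSucc) (fun i => hd i.castSucc)
    rw [Fin.sum_univ_castSucc]
    exact RS.cons _ _ _ (ξ (Fin.last n)) h (hm (Fin.castSucc_lt_last _)) (hd (Fin.last n))
      (hξ _).1 (hξ _).2

lemma Regulated.right {f : ℝ → ℝ} {a b : ℝ} (h : Regulated f a b) {x : ℝ} (h1 : a ≤ x)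
    (h2 : x < b) : ∃ L : ℝ, Tendsto f (nhdsWithin x (Ioi x)) (nhds L) := by
  rcases h1.eq_or_lt with rfl | h1
  · exact h.1
  · exact (h.2.2 x ⟨h1, h2⟩).2

lemma Regulated.left {f : ℝ → ℝ} {a b : ℝ} (h : Regulated f a b) {x : ℝ} (h1 : a < x)
    (h2 : x ≤ b) : ∃ L : ℝ, Tendsto f (nhdsWithin x (Iio x)) (nhds L) := by
  rcases h2.eq_or_lt with rfl | h2
  · exact h.2.1
  · exact (h.2.2 x ⟨h1, h2⟩).1

lemma right_elim {p : ℝ → Prop} {x : ℝ} (h : ∀ᶠ t in nhdsWithin x (Ioi x), p t) :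
    ∃ d > 0, ∀ t, x < t → t < x + d → p t := by
  obtain ⟨u, hu, hs⟩ := mem_nhdsGT_iff_exists_Ioo_subset.mp h
  exact ⟨u - x, sub_pos.mpr hu, fun t h1 h2 => hs ⟨h1, by linarith⟩⟩

lemma left_elim {p : ℝ → Prop} {x : ℝ} (h : ∀ᶠ t in nhdsWithin x (Iio x), p t) :
    ∃ d > 0, ∀ t, x - d < t → t < x → p t := by
  obtain ⟨u, hu, hs⟩ := mem_nhdsLT_iff_exists_Ioo_subset.mp h
  exact ⟨x - u, sub_pos.mpr hu, fun t h1 h2 => hs ⟨by linarith, h2⟩⟩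

lemma lim_elim {f : ℝ → ℝ} {l : Filter ℝ} {L e : ℝ} (h : Tendsto f l (nhds L)) (he : 0 < e) :
    ∀ᶠ t in l, |f t - L| < e := by
  have := Metric.tendsto_nhds.mp h e he
  simpa [Real.dist_eq] using this

lemma Regulated.bdd {f : ℝ → ℝ} {a b : ℝ} (h : Regulated f a b) :
    ∃ C : ℝ, 0 ≤ C ∧ ∀ t ∈ Icc a b, |f t| ≤ C := by
  refine (isCompact_Icc (a := a) (b := b)).induction_on
    (p := fun s => ∃ C : ℝ, 0 ≤ C ∧ ∀ t ∈ s, |f t| ≤ C) ⟨0, le_rfl, by simp⟩ ?_ ?_ ?_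
  · rintro s t hst ⟨C, h0, hC⟩
    exact ⟨C, h0, fun x hx => hC x (hst hx)⟩
  · rintro s t ⟨C, h0, hC⟩ ⟨D, h1, hD⟩
    refine ⟨max C D, le_max_of_le_left h0, ?_⟩
    rintro x (hx | hx)
    · exact (hC x hx).trans (le_max_left _ _)
    · exact (hD x hx).trans (le_max_right _ _)
  · intro x hx
    have hr : ∃ d > 0, ∃ C, ∀ t ∈ Icc a b, x < t → t < x + d → |f t| ≤ C := by
      rcases hx.2.eq_or_lt with he | hl
      · exact ⟨1, one_pos, 0, fun t ht h1 _ => absurd ht.2 (by linarith)⟩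
      · obtain ⟨L, hL⟩ := h.right hx.1 hl
        obtain ⟨d, hd, hh⟩ := right_elim (lim_elim hL one_pos)
        refine ⟨d, hd, |L| + 1, fun t _ h1 h2 => ?_⟩
        have := hh t h1 h2
        have := abs_sub_abs_le_abs_sub (f t) L
        linarith
    have hl : ∃ d > 0, ∃ C, ∀ t ∈ Icc a b, x - d < t → t < x → |f t| ≤ C := by
      rcases hx.1.eq_or_lt with he | hl
      · exact ⟨1, one_pos, 0, fun t ht _ h1 => absurd ht.1 (by linarith)⟩
      · obtain ⟨L, hL⟩ := h.left hl hx.2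
        obtain ⟨d, hd, hh⟩ := left_elim (lim_elim hL one_pos)
        refine ⟨d, hd, |L| + 1, fun t _ h1 h2 => ?_⟩
        have := hh t h1 h2
        have := abs_sub_abs_le_abs_sub (f t) L
        linarith
    obtain ⟨d, hd, C, hC⟩ := hr
    obtain ⟨d', hd', C', hC'⟩ := hl
    refine ⟨Ioo (x - d') (x + d) ∩ Icc a b, ?_, max (|f x|) (max C C'),
      le_max_of_le_left (abs_nonneg _), ?_⟩
    · exact inter_mem (mem_nhdsWithin_of_mem_nhds (Ioo_mem_nhds (by linarith) (by linarith)))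
        self_mem_nhdsWithin
    · rintro t ⟨⟨h1, h2⟩, ht⟩
      rcases lt_trichotomy t x with h | rfl | h
      · exact (hC' t ht h1 h).trans ((le_max_right _ _).trans (le_max_right _ _))
      · exact le_max_left _ _
      · exact (hC t ht h h2).trans ((le_max_left _ _).trans (le_max_right _ _))

lemma NC {f g : ℝ → ℝ} {a b C v e : ℝ} (hC : 0 ≤ C) (hf : ∀ t ∈ Icc a b, |f t| ≤ C)
    (hg : ∀ t ∈ Icc a b, |g t| ≤ C) (h : NoCommonDiscont f g a b) (hv : v ∈ Icc a b)
    (he : 0 < e) : ∃ δ > 0, ∀ p ξ q, a ≤ p → q ≤ b → p ≤ v → v ≤ q → q - p < δ → p ≤ ξ → ξ ≤ q →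
      |(f ξ - f v) * (g q - g p)| ≤ e := by
  have bd : ∀ h : ℝ → ℝ, (∀ t ∈ Icc a b, |h t| ≤ C) → ∀ x ∈ Icc a b, ∀ y ∈ Icc a b,
      |h x - h y| ≤ 2 * C := fun h hh x hx y hy => by
    have := hh x hx; have := hh y hy; have := abs_sub (h x) (h y); linarith
  have hpos : 0 < e / (4 * C + 1) := by positivity
  have fin : e / (4 * C + 1) * (4 * C) ≤ e := by
    rw [div_mul_eq_mul_div, div_le_iff₀ (by positivity)]; nlinarith
  rcases h v hv with hc | hc
  · obtain ⟨δ, hδ, hh⟩ := Metric.continuousWithinAt_iff.mp hc _ hpos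
    refine ⟨δ, hδ, fun p ξ q h1 h2 h3 h4 h5 h6 h7 => ?_⟩
    have k1 : |f ξ - f v| ≤ e / (4 * C + 1) := by
      have := hh (x := ξ) ⟨h1.trans h6, h7.trans h2⟩ (by
        rw [Real.dist_eq, abs_lt]; constructor <;> linarith)
      rw [Real.dist_eq] at this; exact this.le
    have k2 := bd g hg q ⟨by linarith, h2⟩ p ⟨h1, by linarith⟩
    rw [abs_mul]
    calc _ ≤ e / (4 * C + 1) * (2 * C) := mul_le_mul k1 k2 (abs_nonneg _) hpos.le
      _ ≤ e / (4 * C + 1) * (4 * C) := by gcongr; norm_num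
      _ ≤ e := fin
  · obtain ⟨δ, hδ, hh⟩ := Metric.continuousWithinAt_iff.mp hc _ hpos
    refine ⟨δ, hδ, fun p ξ q h1 h2 h3 h4 h5 h6 h7 => ?_⟩
    have k1 : |g q - g v| ≤ e / (4 * C + 1) := by
      have := hh (x := q) ⟨by linarith, h2⟩ (by
        rw [Real.dist_eq, abs_lt]; constructor <;> linarith)
      rw [Real.dist_eq] at this; exact this.le
    have k1' : |g p - g v| ≤ e / (4 * C + 1) := by
      have := hh (x := p) ⟨h1, by linarith⟩ (by
        rw [Real.dist_eq, abs_lt]; constructor <;> linarith)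
      rw [Real.dist_eq] at this; exact this.le
    have k3 : |g q - g p| ≤ e / (4 * C + 1) * 2 := by
      rw [abs_le] at *; constructor <;> linarith
    have k2 := bd f hf ξ ⟨by linarith, by linarith⟩ v hv
    rw [abs_mul]
    calc _ ≤ (2 * C) * (e / (4 * C + 1) * 2) := mul_le_mul k2 k3 (abs_nonneg _) (by linarith)
      _ = e / (4 * C + 1) * (4 * C) := by ring
      _ ≤ e := fin

def QQ (f g : ℝ → ℝ) (φ : ℝ → ℝ → ℝ) (u v : ℝ) : Prop :=
  ∃ J : ℝ, ∀ κ > 0, ∃ δ > 0, ∀ R, RS f g δ u v R → |R - J| ≤ φ u v + κ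

lemma sewing {f g : ℝ → ℝ} {a b : ℝ} (hab : a < b)
    (hf : Regulated f a b) (hg : Regulated g a b) (hfg : NoCommonDiscont f g a b)
    (φ : ℝ → ℝ → ℝ) (hφ0 : ∀ u v, 0 ≤ φ u v)
    (hφ : ∀ u v w, a ≤ u → u ≤ v → v ≤ w → w ≤ b → φ u v + φ v w ≤ φ u w)
    (ε : ℝ) (hε : 0 < ε)
    (hloc : ∀ u v, a ≤ u → u ≤ v → v ≤ b →
      (∀ x ∈ Icc u v, ∀ y ∈ Icc u v, |f x - f y| ≤ ε ∧ |g x - g y| ≤ ε) →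
      ∀ δ R, RS f g δ u v R → |R - f u * (g v - g u)| ≤ φ u v) :
    QQ f g φ a b := by
  obtain ⟨C1, hC1, hfC⟩ := hf.bdd
  obtain ⟨C2, hC2, hgC⟩ := hg.bdd
  have nc := fun v e => NC (v := v) (e := e) (le_max_of_le_left (b := C1) (c := C2) hC1)
    (fun t ht => (hfC t ht).trans (le_max_left _ _)) (fun t ht => (hgC t ht).trans (le_max_right _ _)) hfg
  have concat : ∀ u v w, a ≤ u → u ≤ v → v ≤ w → w ≤ b → QQ f g φ u v → QQ f g φ v w →
      QQ f g φ u w := by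
    rintro u v w h1 h2 h3 h4 ⟨J1, H1⟩ ⟨J2, H2⟩
    refine ⟨J1 + J2, fun κ hκ => ?_⟩
    obtain ⟨d1, hd1, H1⟩ := H1 (κ/3) (by positivity)
    obtain ⟨d2, hd2, H2⟩ := H2 (κ/3) (by positivity)
    obtain ⟨d3, hd3, H3⟩ := nc v (κ/3) ⟨h1.trans h2, h3.trans h4⟩ (by positivity)
    refine ⟨min d1 (min d2 d3), by positivity, fun R hR => ?_⟩
    obtain ⟨R1, R2, k1, k2, k3⟩ := hR.split (v := v) (e := κ/3) (a := a) (b := b) (by positivity) h1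
        (fun p ξ q i1 i2 i3 i4 i5 i6 i7 => H3 p ξ q i1 i2 i3 i4
          (i5.trans_le ((min_le_right _ _).trans (min_le_right _ _))) i6 i7) h2 h4 h3
    have l1 := H1 R1 (k1.mono (min_le_left _ _))
    have l2 := H2 R2 (k2.mono ((min_le_right _ _).trans (min_le_left _ _)))
    have l3 := hφ u v w h1 h2 h3 h4
    rw [abs_le] at *
    constructor <;> linarith
  have right : ∀ x, a ≤ x → x < b → ∃ d > 0, ∀ v, x < v → v < x + d → v ≤ b → QQ f g φ x v := by
    intro x h1 h2
    obtain ⟨L, hL⟩ := hf.right h1 h2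
    obtain ⟨M, hM⟩ := hg.right h1 h2
    obtain ⟨d, hd, hh⟩ := right_elim ((lim_elim hL (half_pos hε)).and (lim_elim hM (half_pos hε)))
    refine ⟨d, hd, fun v hxv hvd hvb => ?_⟩
    refine ⟨f x * (M - g x) + L * (g v - M), fun κ hκ => ?_⟩
    have lim : Tendsto (fun p => f x * (g p - g x) + f p * (g v - g p)) (nhdsWithin x (Ioi x))
        (nhds (f x * (M - g x) + L * (g v - M))) :=
      ((hM.sub_const _).const_mul _).add (hL.mul (hM.const_sub _))
    obtain ⟨d1, hd1, H1⟩ := right_elim (lim_elim lim (half_pos hκ))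
    obtain ⟨d2, hd2, H2⟩ := nc x (κ/2) ⟨h1, h2.le⟩ (by positivity)
    refine ⟨min d1 d2, by positivity, fun R hR => ?_⟩
    obtain ⟨p, ξ, R2, a1, a2, a3, a4, a5, a6, a7⟩ := hR.head hxv
    have b1 := H1 p a1 (by linarith [min_le_left d1 d2])
    have b2 := H2 x ξ p h1 (a2.trans hvb) le_rfl a1.le (by linarith [min_le_right d1 d2]) a4 a5
    have b3 := hloc p v (h1.trans a1.le) a2 hvb (by
      intro y hy z hz
      have i1 := hh y (a1.trans_le hy.1) (hy.2.trans_lt hvd)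
      have i2 := hh z (a1.trans_le hz.1) (hz.2.trans_lt hvd)
      simp only [abs_lt, abs_le] at *
      constructor <;> constructor <;> linarith) _ _ a6
    have b4 := hφ x p v h1 a1.le a2 hvb
    have b5 := hφ0 x p
    rw [show (f ξ - f x) * (g p - g x) = f ξ * (g p - g x) - f x * (g p - g x) by ring] at b2
    rw [a7]
    simp only [abs_lt, abs_le] at *
    constructor <;> linarith
  have left : ∀ x, a < x → x ≤ b → ∃ d > 0, ∀ u, a ≤ u → x - d < u → u < x → QQ f g φ u x := by
    intro x h1 h2
    obtain ⟨L, hL⟩ := hf.left h1 h2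
    obtain ⟨M, hM⟩ := hg.left h1 h2
    obtain ⟨d, hd, hh⟩ := left_elim ((lim_elim hL (half_pos hε)).and (lim_elim hM (half_pos hε)))
    refine ⟨d, hd, fun u hau hud hux => ?_⟩
    refine ⟨f x * (g x - M) + f u * (M - g u), fun κ hκ => ?_⟩
    have lim : Tendsto (fun p => f x * (g x - g p) + f u * (g p - g u)) (nhdsWithin x (Iio x))
        (nhds (f x * (g x - M) + f u * (M - g u))) :=
      ((hM.const_sub _).const_mul _).add ((hM.sub_const _).const_mul _)
    obtain ⟨d1, hd1, H1⟩ := left_elim (lim_elim lim (half_pos hκ))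
    obtain ⟨d2, hd2, H2⟩ := nc x (κ/2) ⟨h1.le, h2⟩ (by positivity)
    refine ⟨min d1 d2, by positivity, fun R hR => ?_⟩
    obtain ⟨p, ξ, R1, a1, a2, a3, a4, a5, a6, a7⟩ := hR.tail hux
    have b1 := H1 p (by linarith [min_le_left d1 d2]) a2
    have b2 := H2 p ξ x (hau.trans a1) h2 a2.le le_rfl (by linarith [min_le_right d1 d2]) a4 a5
    have b3 := hloc u p hau a1 (a2.le.trans h2) (by
      intro y hy z hz
      have i1 := hh y (hud.trans_le hy.1) (hy.2.trans_lt a2)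
      have i2 := hh z (hud.trans_le hz.1) (hz.2.trans_lt a2)
      simp only [abs_lt, abs_le] at *
      constructor <;> constructor <;> linarith) _ _ a6
    have b4 := hφ u p x hau a1 a2.le h2
    have b5 := hφ0 p x
    rw [show (f ξ - f x) * (g x - g p) = f ξ * (g x - g p) - f x * (g x - g p) by ring] at b2
    rw [a7]
    simp only [abs_lt, abs_le] at *
    constructor <;> linarith
  -- sup argument
  let A : Set ℝ := {v | v ∈ Icc a b ∧ QQ f g φ a v}
  have haA : a ∈ A := by
    refine ⟨⟨le_rfl, hab.le⟩, 0, fun κ hκ => ⟨1, one_pos, fun R hR => ?_⟩⟩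
    rw [hR.self rfl]
    have := hφ0 a a
    simp; linarith
  have hbdd : BddAbove A := ⟨b, fun v hv => hv.1.2⟩
  have hac : a ≤ sSup A := le_csSup hbdd haA
  have hcb : sSup A ≤ b := csSup_le ⟨a, haA⟩ fun v hv => hv.1.2
  have hcA : QQ f g φ a (sSup A) := by
    rcases hac.eq_or_lt with he | hlt
    · rw [← he]; exact haA.2
    · obtain ⟨d, hd, H⟩ := left _ hlt hcb
      obtain ⟨u, huA, hu⟩ := exists_lt_of_lt_csSup ⟨a, haA⟩ (show sSup A - d < sSup A by linarith)
      rcases (le_csSup hbdd huA).eq_or_lt with he | hl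
      · rw [← he]; exact huA.2
      · exact concat a u _ le_rfl huA.1.1 hl.le hcb huA.2 (H u huA.1.1 hu hl)
  rcases hcb.eq_or_lt with he | hlt
  · rw [← he]; exact hcA
  · exfalso
    obtain ⟨d, hd, H⟩ := right _ hac hlt
    set c := sSup A with hc
    have h1 : c < min b (c + d/2) := lt_min hlt (by linarith)
    have h2 : min b (c + d/2) ≤ b := min_le_left _ _
    have h3 : min b (c + d/2) < c + d := (min_le_right _ _).trans_lt (by linarith)
    have : min b (c + d/2) ∈ A :=
      ⟨⟨hac.trans h1.le, h2⟩, concat a c _ le_rfl hac h1.le h2 hcA (H _ h1 h3 h2)⟩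
    exact absurd (le_csSup hbdd this) (not_le.mpr h1)

lemma exists_limit {f g : ℝ → ℝ} {a b : ℝ} (hab : a < b)
    (h : ∀ ε > 0, ∃ J δ : ℝ, 0 < δ ∧ ∀ R, RS f g δ a b R → |R - J| ≤ ε) :
    ∃ I : ℝ, ∀ ε > 0, ∃ δ > 0, ∀ R, RS f g δ a b R → |R - I| < ε := by
  choose J δ hδ H using fun n : ℕ => h (1 / ((n:ℝ) + 1)) (by positivity)
  have hc : CauchySeq J := by
    refine cauchySeq_of_le_tendsto_0 (fun n : ℕ => 2 * (1 / ((n:ℝ) + 1))) ?_ ?_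
    · intro n m N hn hm
      obtain ⟨R, hR⟩ := RS.exists f g (lt_min (hδ n) (hδ m)) hab.le
      have k1 := H n R (hR.mono (min_le_left _ _))
      have k2 := H m R (hR.mono (min_le_right _ _))
      have k3 : 1 / ((n:ℝ) + 1) ≤ 1 / ((N:ℝ) + 1) := Nat.one_div_le_one_div hn
      have k4 : 1 / ((m:ℝ) + 1) ≤ 1 / ((N:ℝ) + 1) := Nat.one_div_le_one_div hm
      rw [Real.dist_eq]
      rw [abs_le] at *
      constructor <;> linarith
    · simpa using (tendsto_one_div_add_atTop_nhds_zero_nat (𝕜 := ℝ)).const_mul 2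
  obtain ⟨I, hI⟩ := cauchySeq_tendsto_of_complete hc
  refine ⟨I, fun ε hε => ?_⟩
  have e1 : ∀ᶠ n : ℕ in atTop, |J n - I| < ε / 2 := by
    have := Metric.tendsto_nhds.mp hI (ε/2) (half_pos hε)
    simpa [Real.dist_eq] using this
  have e2 : ∀ᶠ n : ℕ in atTop, 1 / ((n:ℝ) + 1) < ε / 2 :=
    (tendsto_one_div_add_atTop_nhds_zero_nat (𝕜 := ℝ)).eventually (gt_mem_nhds (half_pos hε))
  obtain ⟨n, h1, h2⟩ := (e1.and e2).exists
  refine ⟨δ n, hδ n, fun R hR => ?_⟩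
  have := H n R hR
  rw [abs_le] at this
  rw [abs_lt] at *
  constructor <;> linarith


lemma Phi_superadd (f g : ℝ → ℝ) (η θ : ℕ → ℝ) (m : ℝ) {u v w : ℝ} (huv : u ≤ v) (hvw : v ≤ w) :
    Phi f g η θ m u v + Phi f g η θ m v w ≤ Phi f g η θ m u w := by
  unfold Phi
  rw [add_add_add_comm, ← ENNReal.tsum_add, ← ENNReal.tsum_add]
  refine add_le_add (ENNReal.tsum_le_tsum fun k => ?_) (ENNReal.tsum_le_tsum fun k => ?_)
  · rw [← mul_add]; exact mul_le_mul_right (truncVar_superadd huv hvw) _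
  · rw [← mul_add]; exact mul_le_mul_right (truncVar_superadd huv hvw) _

lemma Phi_le (f g : ℝ → ℝ) (η θ : ℕ → ℝ) (m : ℝ) {a u v b : ℝ} (h1 : a ≤ u) (h2 : u ≤ v)
    (h3 : v ≤ b) : Phi f g η θ m u v ≤ Phi f g η θ m a b :=
  calc _ ≤ Phi f g η θ m a u + Phi f g η θ m u v := le_add_self
    _ ≤ Phi f g η θ m a v := Phi_superadd _ _ _ _ _ h1 h2
    _ ≤ Phi f g η θ m a v + Phi f g η θ m v b := le_self_add
    _ ≤ _ := Phi_superadd _ _ _ _ _ (h1.trans h2) h3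

lemma exists_small {V : ENNReal} (hV : V ≠ ⊤) {ε : ℝ} (hε : 0 < ε) :
    ∃ e > 0, ENNReal.ofReal e * V ≤ ENNReal.ofReal ε := by
  have h0 : 0 ≤ V.toReal := ENNReal.toReal_nonneg
  refine ⟨ε / (V.toReal + 1), by positivity, ?_⟩
  conv_lhs => rw [← ENNReal.ofReal_toReal hV]
  rw [← ENNReal.ofReal_mul (by positivity)]
  apply ENNReal.ofReal_le_ofReal
  rw [div_mul_eq_mul_div, div_le_iff₀ (by positivity)]
  rw [ENNReal.ofReal_toReal hV]
  nlinarith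

lemma Phi_zero (f g : ℝ → ℝ) (m a b : ℝ) :
    Phi f g (fun _ => 0) (fun _ => 0) m a b = ENNReal.ofReal m * truncVar g 0 a b := by
  unfold Phi
  rw [tsum_eq_single 0]
  · simp
  · intro k hk; simp [hk]

def Good (η : ℕ → ℝ) : Prop := (∀ k, 0 ≤ η k) ∧ Antitone η ∧ Tendsto η atTop (nhds 0)

lemma Good.zero : Good (fun _ => 0) := ⟨fun _ => le_rfl, antitone_const, tendsto_const_nhds⟩

lemma Good.shift {η : ℕ → ℝ} (h : Good η) (K : ℕ) : Good (fun k => η (k + K)) :=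
  ⟨fun k => h.1 _, fun i j hij => h.2.1 (by omega), (tendsto_add_atTop_iff_nat K).mpr h.2.2⟩

def SmallPhi (f g : ℝ → ℝ) (a b : ℝ) : Prop :=
  ∀ ε > 0, ∃ e > 0, ∃ η θ : ℕ → ℝ, Good η ∧ Good θ ∧
    (Phi f g η θ e a b ≤ ENNReal.ofReal ε ∨ Phi g f θ η e a b ≤ ENNReal.ofReal ε)

lemma small_of_g {f g : ℝ → ℝ} {a b : ℝ} (h : truncVar g 0 a b ≠ ⊤) : SmallPhi f g a b := by
  intro ε hε
  obtain ⟨e, he, h⟩ := exists_small h hε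
  exact ⟨e, he, _, _, Good.zero, Good.zero, Or.inl (by rwa [Phi_zero])⟩

lemma small_of_f {f g : ℝ → ℝ} {a b : ℝ} (h : truncVar f 0 a b ≠ ⊤) : SmallPhi f g a b := by
  intro ε hε
  obtain ⟨e, he, h⟩ := exists_small h hε
  exact ⟨e, he, _, _, Good.zero, Good.zero, Or.inr (by rwa [Phi_zero])⟩

lemma ne_top_of_mul {c : ℝ} {V : ENNReal} (hc : 0 < c) (h : ENNReal.ofReal c * V ≠ ⊤) : V ≠ ⊤ := by
  rintro rfl
  exact h (ENNReal.mul_top (by simpa using hc))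

lemma truncVar_const {f : ℝ → ℝ} {a b : ℝ} (h : ∀ x ∈ Icc a b, f x = f a) :
    truncVar f 0 a b ≠ ⊤ := by
  have : truncVar f 0 a b ≤ 0 := by
    apply truncVar_le
    intro s v hv
    have : v = 0 := by
      induction hv with
      | single s hs => rfl
      | step s s' v hc hs hlt ih => rw [h s' hs, h s hc.mem, ih]; simp
    simp [this]
  exact ne_top_of_le_ne_top ENNReal.zero_ne_top this

lemma small_of_Phi {f g : ℝ → ℝ} {η θ : ℕ → ℝ} {m a b : ℝ} (hη : Good η) (hθ : Good θ)
    (hm0 : 0 ≤ m) (hc : m = 0 → truncVar f 0 a b ≠ ⊤) (h : Phi f g η θ m a b ≠ ⊤) :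
    SmallPhi f g a b := by
  unfold Phi at h
  rw [Ne, ENNReal.add_eq_top, not_or] at h
  obtain ⟨hT1, hT2⟩ := h
  have t1 := fun k => ENNReal.ne_top_of_tsum_ne_top hT1 k
  have t2 := fun k => ENNReal.ne_top_of_tsum_ne_top hT2 k
  by_cases hz : ∃ k, η k = 0
  · classical
    have hk := Nat.find_spec hz
    have hmin := fun j => Nat.find_min (H := hz) (m := j)
    set k := Nat.find hz with hkdef
    rcases (hθ.1 k).eq_or_lt with h0 | h0
    · have t := t1 k
      rw [← h0] at t
      by_cases hk0 : k = 0
      · rcases hm0.eq_or_lt with hm | hm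
        · exact small_of_f (hc hm.symm)
        · rw [if_pos hk0] at t
          exact small_of_g (ne_top_of_mul (by positivity) t)
      · rw [if_neg hk0] at t
        have : 0 < η (k-1) := lt_of_le_of_ne (hη.1 _) (Ne.symm (hmin (k-1) (by omega)))
        exact small_of_g (ne_top_of_mul (by positivity) t)
    · have t := t2 k
      rw [hk] at t
      exact small_of_f (ne_top_of_mul (by positivity) t)
  · push Not at hz
    have hpos : ∀ k, 0 < η k := fun k => lt_of_le_of_ne (hη.1 k) (hz k).symm
    intro ε hε
    have hε3 : (0:ENNReal) < ENNReal.ofReal (ε/3) := by simpa using hε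
    have e1 := (ENNReal.tendsto_sum_nat_add _ hT1).eventually (gt_mem_nhds hε3)
    have e2 := (ENNReal.tendsto_sum_nat_add _ hT2).eventually (gt_mem_nhds hε3)
    obtain ⟨K, ⟨k1, k2⟩, hK⟩ := ((e1.and e2).and (eventually_ge_atTop 1)).exists
    have hV : truncVar g (θ K) a b ≠ ⊤ := by
      have t := t1 K
      rw [if_neg (by omega)] at t
      have := hpos (K-1)
      exact ne_top_of_mul (by positivity) t
    obtain ⟨e, he, hle⟩ := exists_small hV (show 0 < ε/3 by positivity)
    refine ⟨e, he, _, _, hη.shift K, hθ.shift K, Or.inl ?_⟩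
    have p2 : ∀ k : ℕ, (2:ℝ)^k ≤ 2^(k+K) := fun k =>
      pow_le_pow_right₀ (by norm_num) (by omega)
    unfold Phi
    have s1 : (∑' k : ℕ, ENNReal.ofReal ((2 : ℝ) ^ k * (if k = 0 then e else η (k - 1 + K))) *
            truncVar g (θ (k+K)) a b) ≤ ENNReal.ofReal (ε/3) + ENNReal.ofReal (ε/3) := by
      calc _ ≤ ∑' k : ℕ, ((if k = 0 then ENNReal.ofReal e * truncVar g (θ K) a b else 0) +
              ENNReal.ofReal ((2 : ℝ) ^ (k+K) * (if k+K = 0 then m else η (k + K - 1))) *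
            truncVar g (θ (k+K)) a b) := by
            refine ENNReal.tsum_le_tsum fun k => ?_
            by_cases hk : k = 0
            · subst hk
              simp
            · rw [if_neg hk, if_neg hk, if_neg (by omega), zero_add,
                show k - 1 + K = k + K - 1 by omega]
              refine mul_le_mul_left (ENNReal.ofReal_le_ofReal ?_) _
              exact mul_le_mul_of_nonneg_right (p2 k) (hη.1 _)
        _ ≤ _ := by
            rw [ENNReal.tsum_add, tsum_ite_eq]
            exact add_le_add hle k1.le
    have s2 : (∑' k : ℕ, ENNReal.ofReal ((2 : ℝ) ^ k * θ (k+K)) * truncVar f (η (k+K)) a b)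
        ≤ ENNReal.ofReal (ε/3) := by
      refine le_trans (ENNReal.tsum_le_tsum fun k => ?_) k2.le
      refine mul_le_mul_left (ENNReal.ofReal_le_ofReal ?_) _
      exact mul_le_mul_of_nonneg_right (p2 k) (hθ.1 _)
    refine (add_le_add s1 s2).trans (le_of_eq ?_)
    rw [← ENNReal.ofReal_add (by positivity) (by positivity),
      ← ENNReal.ofReal_add (by positivity) (by positivity)]
    congr 1; ring

lemma SmallPhi.symm {f g : ℝ → ℝ} {a b : ℝ} (h : SmallPhi g f a b) : SmallPhi f g a b := by
  intro ε hε
  obtain ⟨e, he, η, θ, h1, h2, h3⟩ := h ε hε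
  exact ⟨e, he, θ, η, h2, h1, h3.symm⟩

lemma integral_of_small {f g : ℝ → ℝ} {a b : ℝ} (hab : a < b)
    (hf : Regulated f a b) (hg : Regulated g a b) (hfg : NoCommonDiscont f g a b)
    (h : SmallPhi f g a b) :
    ∃ I : ℝ, ∀ ε > 0, ∃ δ > 0, ∀ R, RS f g δ a b R → |R - I| < ε := by
  apply exists_limit hab
  intro ε hε
  obtain ⟨e, he, η, θ, hη, hθ, h3⟩ := h (ε/2) (half_pos hε)
  have main : ∀ (f1 g1 : ℝ → ℝ) (η1 θ1 : ℕ → ℝ), Phi f1 g1 η1 θ1 e a b ≤ ENNReal.ofReal (ε/2) →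
      (∀ u v, a ≤ u → u ≤ v → v ≤ b →
      (∀ x ∈ Icc u v, ∀ y ∈ Icc u v, |f x - f y| ≤ e ∧ |g x - g y| ≤ e) →
      ∀ δ R, RS f g δ u v R → ENNReal.ofReal |R - f u * (g v - g u)| ≤ Phi f1 g1 η1 θ1 e u v) →
      ∃ J δ : ℝ, 0 < δ ∧ ∀ R, RS f g δ a b R → |R - J| ≤ ε := by
    intro f1 g1 η1 θ1 hP hloc
    have fin : ∀ u v, a ≤ u → u ≤ v → v ≤ b → Phi f1 g1 η1 θ1 e u v ≠ ⊤ := fun u v h1 h2 h3 =>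
      ne_top_of_le_ne_top ENNReal.ofReal_ne_top ((Phi_le _ _ _ _ _ h1 h2 h3).trans hP)
    obtain ⟨J, hJ⟩ := sewing hab hf hg hfg (fun u v => (Phi f1 g1 η1 θ1 e u v).toReal)
      (fun u v => ENNReal.toReal_nonneg) (by
        intro u v w h1 h2 h3 h4
        rw [← ENNReal.toReal_add (fin u v h1 h2 (h3.trans h4)) (fin v w (h1.trans h2) h3 h4)]
        exact ENNReal.toReal_mono (fin u w h1 (h2.trans h3) h4) (Phi_superadd _ _ _ _ _ h2 h3))
      e he (by
        intro u v h1 h2 h3 ho δ R hR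
        exact (ENNReal.ofReal_le_iff_le_toReal (fin u v h1 h2 h3)).mp (hloc u v h1 h2 h3 ho δ R hR))
    obtain ⟨δ, hδ, H⟩ := hJ (ε/2) (half_pos hε)
    refine ⟨J, δ, hδ, fun R hR => (H R hR).trans ?_⟩
    have := ENNReal.toReal_le_of_le_ofReal (half_pos hε).le hP
    linarith
  have est := fun u v δ R => est_RS f g η θ hη.1 hθ.1 hη.2.1 hθ.2.1 hη.2.2 hθ.2.2 u v e δ R he.le
  rcases h3 with h3 | h3
  · refine main _ _ _ _ h3 fun u v h1 h2 h3 ho δ R hR => (est u v δ R hR).1 fun x hx => ?_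
    exact (ho x hx u ⟨le_rfl, h2⟩).1
  · refine main _ _ _ _ h3 fun u v h1 h2 h3 ho δ R hR => (est u v δ R hR).2 fun x hx => ?_
    exact (ho v ⟨h2, le_rfl⟩ x hx).2

lemma Regulated.sup_bound {f : ℝ → ℝ} {a b : ℝ} (h : Regulated f a b) (F : ℝ → ℝ) {c : ℝ}
    (hc : c ∈ Icc a b) (hF : ∀ t, F t = |f t - f c|) :
    ∀ t ∈ Icc a b, |f t - f c| ≤ sSup {x | ∃ t ∈ Set.Icc a b, x = F t} := by
  intro t ht
  obtain ⟨C, _, hC⟩ := h.bdd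
  apply le_csSup
  · refine ⟨2 * C, ?_⟩
    rintro x ⟨t, ht, rfl⟩
    have := hC t ht; have := hC c hc; have := abs_sub (f t) (f c)
    rw [hF]; linarith
  · exact ⟨t, ht, (hF t).symm⟩

/-- Corollary 1: existence of the Riemann–Stieltjes integral and the estimate
`|∫_a^b f dg − f(ξ)(g(b) − g(a))| ≤ 2 min{S, S̃}`. -/
theorem rs_integral_estimate_min
    (a b : ℝ) (hab : a < b) (f g : ℝ → ℝ)
    (hf : Regulated f a b) (hg : Regulated g a b)
    (hfg : NoCommonDiscont f g a b)
    (ξ : ℝ) (hξ : ξ ∈ Set.Icc a b)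
    (η θ : ℕ → ℝ) (hηnn : ∀ k, 0 ≤ η k) (hθnn : ∀ k, 0 ≤ θ k)
    (hηa : Antitone η) (hθa : Antitone θ)
    (hηlim : Tendsto η atTop (nhds 0)) (hθlim : Tendsto θ atTop (nhds 0))
    (ηm1 θm1 : ℝ)
    (hηm1 : ηm1 = sSup {x | ∃ t ∈ Set.Icc a b, x = |f t - f a|})
    (hθm1 : θm1 = sSup {x | ∃ t ∈ Set.Icc a b, x = |g b - g t|})
    (S S' : ENNReal)
    (hS : S = (∑' k : ℕ,
          ENNReal.ofReal ((2 : ℝ) ^ k * (if k = 0 then ηm1 else η (k - 1))) *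
            truncVar g (θ k) a b)
        + ∑' k : ℕ, ENNReal.ofReal ((2 : ℝ) ^ k * θ k) * truncVar f (η k) a b)
    (hS' : S' = (∑' k : ℕ,
          ENNReal.ofReal ((2 : ℝ) ^ k * (if k = 0 then θm1 else θ (k - 1))) *
            truncVar f (η k) a b)
        + ∑' k : ℕ, ENNReal.ofReal ((2 : ℝ) ^ k * η k) * truncVar g (θ k) a b)
    (hfin : S < ⊤ ∨ S' < ⊤) :
    ∃ I : ℝ, RSIntegral f g a b I ∧
      ENNReal.ofReal |I - f ξ * (g b - g a)| ≤ 2 * min S S' := by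
  have haI : a ∈ Icc a b := ⟨le_rfl, hab.le⟩
  have hbI : b ∈ Icc a b := ⟨hab.le, le_rfl⟩
  have hη : Good η := ⟨hηnn, hηa, hηlim⟩
  have hθ : Good θ := ⟨hθnn, hθa, hθlim⟩
  have hη1 : ∀ t ∈ Icc a b, |f t - f a| ≤ ηm1 := by
    rw [hηm1]; exact hf.sup_bound _ haI fun t => rfl
  have hθ1 : ∀ t ∈ Icc a b, |g t - g b| ≤ θm1 := by
    rw [hθm1]; exact hg.sup_bound _ hbI fun t => abs_sub_comm _ _
  have hη0 : 0 ≤ ηm1 := (abs_nonneg _).trans (hη1 a haI)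
  have hθ0 : 0 ≤ θm1 := (abs_nonneg _).trans (hθ1 a haI)
  change S = Phi f g η θ ηm1 a b at hS
  change S' = Phi g f θ η θm1 a b at hS'
  have small : SmallPhi f g a b := by
    rcases hfin with h | h
    · refine small_of_Phi hη hθ hη0 ?_ (hS ▸ h.ne)
      intro h0
      apply truncVar_const
      intro x hx
      have := hη1 x hx
      rw [h0, abs_nonpos_iff] at this
      linarith
    · refine (small_of_Phi hθ hη hθ0 ?_ (hS' ▸ h.ne)).symm
      intro h0
      apply truncVar_const
      intro x hx
      have h1 := hθ1 x hx
      have h2 := hθ1 a haI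
      rw [h0, abs_nonpos_iff] at h1 h2
      linarith
  obtain ⟨I, hI⟩ := integral_of_small hab hf hg hfg small
  have est : ∀ δ R, RS f g δ a b R → ENNReal.ofReal |R - f a * (g b - g a)| ≤ min S S' := by
    intro δ R hR
    refine le_min ?_ ?_
    · rw [hS]
      exact (est_RS f g η θ hηnn hθnn hηa hθa hηlim hθlim a b ηm1 δ R hη0 hR).1 hη1
    · rw [hS']
      refine (est_RS f g η θ hηnn hθnn hηa hθa hηlim hθlim a b θm1 δ R hθ0 hR).2 ?_
      intro x hx
      rw [abs_sub_comm]; exact hθ1 x hx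
  refine ⟨I, ?_, ?_⟩
  · intro ε hε
    obtain ⟨δ, hδ, H⟩ := hI ε hε
    refine ⟨δ, hδ, fun n t ζ hm h0 hl hζ hd => H _ ?_⟩
    have := RS.ofFin f g δ n t ζ hm hζ hd
    rwa [h0, hl] at this
  · have hmin : min S S' ≠ ⊤ := by
      rcases hfin with h | h
      · exact ((min_le_left _ _).trans_lt h).ne
      · exact ((min_le_right _ _).trans_lt h).ne
    have estR : ∀ δ R, RS f g δ a b R → |R - f a * (g b - g a)| ≤ (min S S').toReal :=
      fun δ R hR => (ENNReal.ofReal_le_iff_le_toReal hmin).mp (est δ R hR)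
    have h1 : |I - f a * (g b - g a)| ≤ (min S S').toReal := by
      refine le_of_forall_pos_le_add fun ε hε => ?_
      obtain ⟨δ, hδ, H⟩ := hI ε hε
      obtain ⟨R, hR⟩ := RS.exists f g hδ hab.le
      have k1 := H R hR
      have k2 := estR δ R hR
      rw [abs_lt] at k1
      rw [abs_le] at *
      constructor <;> linarith
    have h2 : |f ξ * (g b - g a) - f a * (g b - g a)| ≤ (min S S').toReal := by
      have := RS.cons (f := f) (g := g) (δ := b - a + 1) (u := a) a b 0 ξ .nil hab (by linarith)
        hξ.1 hξ.2
      rw [zero_add] at this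
      exact estR _ _ this
    rw [← ENNReal.ofReal_toReal hmin, show (2:ENNReal) = ENNReal.ofReal 2 by simp,
      ← ENNReal.ofReal_mul (by norm_num)]
    apply ENNReal.ofReal_le_ofReal
    rw [abs_le] at *
    constructor <;> linarith
end

section
/- Let a < b and let f, g : [a;b] → ℝ be functions with no common points of discontinuity. If f has finite p-variation and g has finite q-variation on [a;b], where p > 1, q > 1 and 1/p + 1/q > 1, then the Riemann–Stieltjes integral ∫_a^b f dg exists. -/
open Filter Set

lemma snoc_sum (n : ℕ) (φ : ℝ → ℝ → ENNReal) (u : Fin (n + 1) → ℝ) (x : ℝ) :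
    ∑ i : Fin (n + 1), φ ((Fin.snoc u x : Fin (n + 2) → ℝ) i.succ)
      ((Fin.snoc u x : Fin (n + 2) → ℝ) i.castSucc)
      = ∑ i : Fin n, φ (u i.succ) (u i.castSucc) + φ x (u (Fin.last n)) := by
  rw [Fin.sum_univ_castSucc]
  congr 1
  · apply Finset.sum_congr rfl
    intro i _
    rw [Fin.succ_castSucc, Fin.snoc_castSucc (α := fun _ => ℝ), Fin.snoc_castSucc (α := fun _ => ℝ)]
  · rw [Fin.succ_last, Fin.snoc_last (α := fun _ => ℝ), Fin.snoc_castSucc (α := fun _ => ℝ)]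

lemma snoc_mono (n : ℕ) (u : Fin (n + 1) → ℝ) (x : ℝ) (hu : StrictMono u)
    (hx : u (Fin.last n) < x) : StrictMono (Fin.snoc u x : Fin (n + 2) → ℝ) := by
  rw [Fin.strictMono_iff_lt_succ]
  intro i
  induction i using Fin.lastCases with
  | last =>
    rw [Fin.succ_last, Fin.snoc_last (α := fun _ => ℝ), Fin.snoc_castSucc (α := fun _ => ℝ)]
    exact hx
  | cast i =>
    rw [Fin.succ_castSucc, Fin.snoc_castSucc (α := fun _ => ℝ), Fin.snoc_castSucc (α := fun _ => ℝ)]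
    exact hu (Fin.castSucc_lt_succ)

lemma snoc_mem (n : ℕ) (u : Fin (n + 1) → ℝ) (x : ℝ) (s : Set ℝ) (hu : ∀ i, u i ∈ s)
    (hx : x ∈ s) : ∀ i, (Fin.snoc u x : Fin (n + 2) → ℝ) i ∈ s := by
  intro i
  induction i using Fin.lastCases with
  | last => rw [Fin.snoc_last (α := fun _ => ℝ)]; exact hx
  | cast i => rw [Fin.snoc_castSucc (α := fun _ => ℝ)]; exact hu i

lemma le_pVar (f : ℝ → ℝ) (p a b : ℝ) (n : ℕ) (t : Fin (n + 1) → ℝ) (h : StrictMono t)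
    (h' : ∀ i, t i ∈ Set.Icc a b) :
    ∑ i : Fin n, ENNReal.ofReal (|f (t i.succ) - f (t i.castSucc)| ^ p) ≤ pVar f p a b := by
  unfold pVar
  exact le_iSup_of_le n (le_iSup_of_le t (le_iSup_of_le h (le_iSup_of_le h' le_rfl)))

lemma pVar_mono (f : ℝ → ℝ) (p a s t : ℝ) (hst : s ≤ t) : pVar f p a s ≤ pVar f p a t := by
  refine iSup_le fun n => iSup_le fun u => iSup_le fun hu => iSup_le fun hm => ?_
  exact le_pVar f p a t n u hu (fun i => ⟨(hm i).1, (hm i).2.trans hst⟩)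

lemma pVar_ext (f : ℝ → ℝ) (p a s t : ℝ) (has : a ≤ s) (hst : s < t) :
    pVar f p a s + ENNReal.ofReal (|f t - f s| ^ p) ≤ pVar f p a t := by
  have key : ∀ (n : ℕ) (u : Fin (n + 1) → ℝ), StrictMono u → (∀ i, u i ∈ Set.Icc a s) →
      ∑ i : Fin n, ENNReal.ofReal (|f (u i.succ) - f (u i.castSucc)| ^ p)
        + ENNReal.ofReal (|f t - f s| ^ p) ≤ pVar f p a t := by
    have base : ∀ (n : ℕ) (u : Fin (n + 1) → ℝ), StrictMono u → (∀ i, u i ∈ Set.Icc a s) →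
      u (Fin.last n) = s →
      ∑ i : Fin n, ENNReal.ofReal (|f (u i.succ) - f (u i.castSucc)| ^ p)
        + ENNReal.ofReal (|f t - f s| ^ p) ≤ pVar f p a t := by
      intro n u hu hm hl
      have h1 := le_pVar f p a t (n + 1) (Fin.snoc u t) (snoc_mono n u t hu (by rw [hl]; exact hst))
        (snoc_mem n u t _ (fun i => ⟨(hm i).1, (hm i).2.trans hst.le⟩) ⟨has.trans hst.le, le_rfl⟩)
      rw [snoc_sum n (fun x y => ENNReal.ofReal (|f x - f y| ^ p)), hl] at h1
      exact h1
    intro n u hu hm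
    rcases (hm (Fin.last n)).2.eq_or_lt with h | h
    · exact base n u hu hm h
    · have h1 := base (n + 1) (Fin.snoc u s) (snoc_mono n u s hu h)
        (snoc_mem n u s _ hm ⟨has, le_rfl⟩) (Fin.snoc_last (α := fun _ => ℝ) _ _)
      rw [snoc_sum n (fun x y => ENNReal.ofReal (|f x - f y| ^ p))] at h1
      refine le_trans ?_ h1
      gcongr
      exact le_self_add
  have hc : ENNReal.ofReal (|f t - f s| ^ p) ≤ pVar f p a t := by
    have := key 0 (fun _ => s) (Subsingleton.strictMono (α := Fin 1) _) (fun _ => ⟨has, le_rfl⟩)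
    simpa using this
  have h2 : pVar f p a s ≤ pVar f p a t - ENNReal.ofReal (|f t - f s| ^ p) := by
    refine iSup_le fun n => iSup_le fun u => iSup_le fun hu => iSup_le fun hm => ?_
    exact ENNReal.le_sub_of_add_le_right ENNReal.ofReal_ne_top (key n u hu hm)
  calc _ ≤ pVar f p a t - ENNReal.ofReal (|f t - f s| ^ p) + ENNReal.ofReal (|f t - f s| ^ p) := by
        gcongr
    _ = _ := tsub_add_cancel_of_le hc

/-- a real-valued control -/
lemma control_fn (f : ℝ → ℝ) (p a b : ℝ) (hp : 0 < p) (hf : pVar f p a b < ⊤) :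
    ∃ F : ℝ → ℝ, ∀ s t, a ≤ s → s ≤ t → t ≤ b → |f t - f s| ^ p ≤ F t - F s := by
  refine ⟨fun t => (pVar f p a t).toReal, fun s t has hst htb => ?_⟩
  rcases hst.eq_or_lt with rfl | hst
  · simp [Real.zero_rpow hp.ne']
  · have h := pVar_ext f p a s t has hst
    have ht : pVar f p a t ≠ ⊤ := ((pVar_mono f p a t b htb).trans_lt hf).ne
    have hs : pVar f p a s ≠ ⊤ := ((pVar_mono f p a s b (hst.le.trans htb)).trans_lt hf).ne
    have h3 := ENNReal.toReal_mono ht h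
    rw [ENNReal.toReal_add hs ENNReal.ofReal_ne_top, ENNReal.toReal_ofReal (by positivity)] at h3
    simp only
    linarith

lemma osc_small (f g : ℝ → ℝ) (a b : ℝ) (hfg : NoCommonDiscont f g a b) (ε : ℝ) (hε : 0 < ε) :
    ∃ δ > 0, ∀ c d, a ≤ c → d ≤ b → c ≤ d → d - c < δ →
      (∀ x ∈ Icc c d, ∀ y ∈ Icc c d, |f x - f y| ≤ ε) ∨
      (∀ x ∈ Icc c d, ∀ y ∈ Icc c d, |g x - g y| ≤ ε) := by
  have loc : ∀ x ∈ Icc a b, ∃ r > 0, (∀ y ∈ Icc a b, |y - x| < r → |f y - f x| < ε / 2) ∨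
      (∀ y ∈ Icc a b, |y - x| < r → |g y - g x| < ε / 2) := by
    intro x hx
    rcases hfg x hx with h | h
    · obtain ⟨r, hr, h⟩ := Metric.continuousWithinAt_iff.1 h (ε / 2) (by positivity)
      exact ⟨r, hr, Or.inl fun y hy hxy => h hy hxy⟩
    · obtain ⟨r, hr, h⟩ := Metric.continuousWithinAt_iff.1 h (ε / 2) (by positivity)
      exact ⟨r, hr, Or.inr fun y hy hxy => h hy hxy⟩
  choose! r hr hloc using loc
  obtain ⟨δ, hδ, H⟩ := lebesgue_number_lemma_of_metric (s := Icc a b)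
    (c := fun x : Icc a b => Metric.ball (x : ℝ) (r x)) isCompact_Icc (fun _ => Metric.isOpen_ball)
    (fun x hx => mem_iUnion.2 ⟨⟨x, hx⟩, Metric.mem_ball_self (hr x hx)⟩)
  refine ⟨δ, hδ, fun c d hac hdb hcd hδ' => ?_⟩
  obtain ⟨⟨z, hz⟩, hsub⟩ := H c ⟨hac, hcd.trans hdb⟩
  have hin : ∀ x ∈ Icc c d, x ∈ Icc a b ∧ |x - z| < r z := by
    intro x hx
    refine ⟨⟨hac.trans hx.1, hx.2.trans hdb⟩, ?_⟩
    have : x ∈ Metric.ball c δ := by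
      rw [Metric.mem_ball, Real.dist_eq, abs_of_nonneg (by linarith [hx.1])]
      linarith [hx.2]
    exact hsub this
  rcases hloc z hz with h | h
  · left
    intro x hx y hy
    have h1 := h x (hin x hx).1 (hin x hx).2
    have h2 := h y (hin y hy).1 (hin y hy).2
    rw [abs_lt] at h1 h2
    rw [abs_le]; constructor <;> linarith
  · right
    intro x hx y hy
    have h1 := h x (hin x hx).1 (hin x hx).2
    have h2 := h y (hin y hy).1 (hin y hy).2
    rw [abs_lt] at h1 h2
    rw [abs_le]; constructor <;> linarith

/-- left sums -/
noncomputable def lsum (f g : ℝ → ℝ) (n : ℕ) (s : ℕ → ℝ) : ℝ :=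
  ∑ j ∈ Finset.range n, f (s j) * (g (s (j + 1)) - g (s j))

lemma lsum_delete (f g : ℝ → ℝ) (s : ℕ → ℝ) (m n : ℕ) :
    lsum f g (m + 2 + n) s - lsum f g (m + 1 + n) (fun j => if j < m + 1 then s j else s (j + 1))
      = (f (s (m + 1)) - f (s m)) * (g (s (m + 2)) - g (s (m + 1))) := by
  induction n with
  | zero =>
    unfold lsum
    simp only [add_zero]
    rw [Finset.sum_range_succ, Finset.sum_range_succ, Finset.sum_range_succ]
    have : ∑ j ∈ Finset.range m, f (if j < m + 1 then s j else s (j + 1)) *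
        (g (if j + 1 < m + 1 then s (j + 1) else s (j + 1 + 1))
          - g (if j < m + 1 then s j else s (j + 1)))
        = ∑ j ∈ Finset.range m, f (s j) * (g (s (j + 1)) - g (s j)) := by
      apply Finset.sum_congr rfl
      intro j hj
      rw [Finset.mem_range] at hj
      rw [if_pos (by omega), if_pos (by omega)]
    rw [this]
    simp
    ring
  | succ n ih =>
    unfold lsum at *
    rw [← add_assoc, ← add_assoc, Finset.sum_range_succ,
      Finset.sum_range_succ _ (m + 1 + n)]
    have e : m + 2 + n = m + 1 + n + 1 := by omega
    dsimp only at ih ⊢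
    rw [if_neg (by omega : ¬ (m + 1 + n < m + 1)), if_neg (by omega : ¬ (m + 1 + n + 1 < m + 1))]
    rw [e] at ih ⊢
    linarith

/-- pigeonhole -/
lemma pigeon (F : ℝ → ℝ) (s : ℕ → ℝ) (n : ℕ) (hs : ∀ i j, i ≤ j → j ≤ n + 2 → F (s i) ≤ F (s j)) :
    ∃ m ≤ n, F (s (m + 2)) - F (s m) ≤ 2 * (F (s (n + 2)) - F (s 0)) / (n + 1) := by
  by_contra! h
  have tel : ∑ m ∈ Finset.range (n + 1), (F (s (m + 2)) - F (s m))
      = (F (s (n + 2)) - F (s 1)) + (F (s (n + 1)) - F (s 0)) := by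
    have e : ∀ m, F (s (m + 2)) - F (s m)
      = (F (s (m + 1 + 1)) - F (s (m + 1))) + (F (s (m + 1)) - F (s m)) := by intro m; ring
    simp only [e]
    rw [Finset.sum_add_distrib, Finset.sum_range_sub (fun m => F (s (m + 1))),
      Finset.sum_range_sub (fun m => F (s m))]
  have lt : ∑ m ∈ Finset.range (n + 1), (2 * (F (s (n + 2)) - F (s 0)) / ((n : ℝ) + 1))
      < ∑ m ∈ Finset.range (n + 1), (F (s (m + 2)) - F (s m)) := by
    apply Finset.sum_lt_sum_of_nonempty (by simp)
    intro m hm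
    exact h m (by simpa [Nat.lt_succ_iff] using hm)
  rw [tel, Finset.sum_const, Finset.card_range, nsmul_eq_mul] at lt
  push_cast at lt
  rw [mul_div_cancel₀ _ (by positivity)] at lt
  have h1 := hs 0 1 (by omega) (by omega)
  have h2 := hs (n + 1) (n + 2) (by omega) (by omega)
  linarith

/-- local Young estimate -/
lemma young_local (f g F : ℝ → ℝ) (c d ε θ : ℝ) (hε : 0 ≤ ε) (hθ : 0 < θ)
    (hF : ∀ x y, c ≤ x → x ≤ y → y ≤ d → F x ≤ F y)
    (hfg : ∀ x y, c ≤ x → x ≤ y → y ≤ d → ∀ u ∈ Icc x y, ∀ v ∈ Icc x y, ∀ w ∈ Icc x y,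
      ∀ z ∈ Icc x y, |f u - f v| * |g w - g z| ≤ ε * (F y - F x) ^ θ)
    (ξ : ℝ) (hξ : ξ ∈ Icc c d) (n : ℕ) : ∀ (s : ℕ → ℝ), Monotone s → s 0 = c → s (n + 1) = d →
    |f ξ * (g d - g c) - lsum f g (n + 1) s| ≤
      ε * ((1 + ∑ j ∈ Finset.range n, (2 / ((j : ℝ) + 1)) ^ θ) * (F d - F c) ^ θ) := by
  induction n with
  | zero =>
    intro s hs h0 h1
    have hcd : c ≤ d := hξ.1.trans hξ.2
    simp only [lsum, zero_add, Finset.sum_range_one, Finset.range_zero, Finset.sum_empty, add_zero,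
      one_mul] at *
    rw [h0, h1, ← sub_mul, abs_mul]
    exact hfg c d le_rfl hcd le_rfl _ hξ _ ⟨le_rfl, hcd⟩ _ ⟨hcd, le_rfl⟩ _ ⟨le_rfl, hcd⟩
  | succ n ih =>
    intro s hs h0 h1
    have hlo : ∀ i, c ≤ s i := fun i => h0 ▸ hs (Nat.zero_le i)
    have hhi : ∀ i, i ≤ n + 2 → s i ≤ d := fun i hi => h1 ▸ hs hi
    have hcd : c ≤ d := hξ.1.trans hξ.2
    obtain ⟨m, hm, hle⟩ := pigeon F s n (fun i j hij hj => hF _ _ (hlo i) (hs hij) (hhi j hj))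
    obtain ⟨k, rfl⟩ := Nat.exists_eq_add_of_le hm
    have hdel := lsum_delete f g s m k
    have ih' := ih (fun j => if j < m + 1 then s j else s (j + 1)) (by
      intro i j hij
      dsimp only
      split_ifs
      · exact hs hij
      · exact hs (by omega)
      · omega
      · exact hs (by omega)) (by simpa using h0) (by
        rw [if_neg (by omega)]; exact h1)
    have hω : 0 ≤ F d - F c := sub_nonneg.2 (hF c d le_rfl hcd le_rfl)
    have hω2 : 0 ≤ F (s (m + 2)) - F (s m) :=
      sub_nonneg.2 (hF _ _ (hlo _) (hs (by omega)) (hhi _ (by omega)))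
    have hq : |(f (s (m + 1)) - f (s m)) * (g (s (m + 2)) - g (s (m + 1)))|
        ≤ ε * ((2 / (((m + k : ℕ) : ℝ) + 1)) ^ θ * (F d - F c) ^ θ) := by
      rw [abs_mul]
      refine (hfg (s m) (s (m + 2)) (hlo _) (hs (by omega)) (hhi _ (by omega))
        _ ⟨hs (by omega), hs (by omega)⟩ _ ⟨hs (by omega), hs (by omega)⟩
        _ ⟨hs (by omega), hs (by omega)⟩ _ ⟨hs (by omega), hs (by omega)⟩).trans ?_
      apply mul_le_mul_of_nonneg_left _ hε
      rw [← Real.mul_rpow (by positivity) hω]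
      apply Real.rpow_le_rpow hω2 _ hθ.le
      rw [h0, h1] at hle
      calc _ ≤ _ := hle
        _ = _ := by ring
    rw [Finset.sum_range_succ]
    have e1 : m + k + 1 + 1 = m + 2 + k := by omega
    have e2 : m + k + 1 = m + 1 + k := by omega
    rw [e1]
    rw [e2] at ih'
    rw [abs_le] at *
    constructor <;> nlinarith [ih'.1, ih'.2, hq.1, hq.2, hdel]

/-- clamp -/
noncomputable def clamp (u v x : ℝ) : ℝ := max u (min x v)

lemma clamp_symm (f g : ℝ → ℝ) (u v x y : ℝ) (huv : u ≤ v) (hxy : x ≤ y) :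
    f (clamp u v x) * (g (clamp u v y) - g (clamp u v x))
      = f (clamp x y u) * (g (clamp x y v) - g (clamp x y u)) := by
  unfold clamp
  rcases le_total v x with h | h
  · have e1 : max u (min x v) = v := by rw [min_eq_right h, max_eq_right huv]
    have e2 : max u (min y v) = v := by rw [min_eq_right (h.trans hxy), max_eq_right huv]
    have e3 : max x (min u y) = x := by
      apply max_eq_left; exact (min_le_left _ _).trans (huv.trans h)
    have e4 : max x (min v y) = x := by
      apply max_eq_left; exact (min_le_left _ _).trans h
    rw [e1, e2, e3, e4]; ring
  · rcases le_total y u with h' | h'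
    · have e1 : max u (min x v) = u := by
        apply max_eq_left; exact (min_le_left _ _).trans (hxy.trans h')
      have e2 : max u (min y v) = u := by
        apply max_eq_left; exact (min_le_left _ _).trans h'
      have e3 : max x (min u y) = y := by rw [min_eq_right h', max_eq_right hxy]
      have e4 : max x (min v y) = y := by rw [min_eq_right (h'.trans huv), max_eq_right hxy]
      rw [e1, e2, e3, e4]; ring
    · have e1 : max u (min x v) = max x (min u y) := by
        rw [min_eq_left h, min_eq_left h', max_comm]
      have e2 : max u (min y v) = max x (min v y) := by
        rw [max_eq_right (le_min h' huv), max_eq_right (le_min h hxy), min_comm]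
      rw [e1, e2]

/-- ℕ-indexed tagged partitions -/
def TP (a b δ : ℝ) (n : ℕ) (t ξ : ℕ → ℝ) : Prop :=
  Monotone t ∧ t 0 = a ∧ t n = b ∧ ∀ k < n, t k ≤ ξ k ∧ ξ k ≤ t (k + 1) ∧ t (k + 1) - t k < δ

noncomputable def rsum (f g : ℝ → ℝ) (n : ℕ) (t ξ : ℕ → ℝ) : ℝ :=
  ∑ k ∈ Finset.range n, f (ξ k) * (g (t (k + 1)) - g (t k))

lemma refine_bound (f g F : ℝ → ℝ) (a b ε θ δ : ℝ) (hab : a < b) (hε : 0 ≤ ε) (hθ : 1 < θ)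
    (hF : ∀ x y, a ≤ x → x ≤ y → y ≤ b → F x ≤ F y)
    (hfg : ∀ x y, a ≤ x → x ≤ y → y ≤ b → y - x < δ →
      ∀ u ∈ Icc x y, ∀ v ∈ Icc x y, ∀ w ∈ Icc x y,
      ∀ z ∈ Icc x y, |f u - f v| * |g w - g z| ≤ ε * (F y - F x) ^ θ)
    (n m : ℕ) (t ξ s : ℕ → ℝ) (hT : TP a b δ n t ξ) (hs : Monotone s) (hs0 : s 0 = a)
    (hsm : s m = b) :
    |rsum f g n t ξ - ∑ i ∈ Finset.range n, lsum f g m (fun j => clamp (t i) (t (i + 1)) (s j))|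
      ≤ ε * ((1 + ∑' j : ℕ, (2 / ((j : ℝ) + 1)) ^ θ) * (F b - F a) ^ θ) := by
  obtain ⟨ht, ht0, htn, hξ⟩ := hT
  have hlo : ∀ i, a ≤ t i := fun i => ht0 ▸ ht (Nat.zero_le i)
  have hhi : ∀ i, i ≤ n → t i ≤ b := fun i hi => htn ▸ ht hi
  obtain ⟨m, rfl⟩ : ∃ m', m = m' + 1 := by
    cases m with
    | zero => rw [hs0] at hsm; exact absurd hsm hab.ne
    | succ m => exact ⟨m, rfl⟩
  have hsum : Summable (fun j : ℕ => (2 / ((j : ℝ) + 1)) ^ θ) := by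
    have h1 := (summable_nat_add_iff 1).2 (Real.summable_one_div_nat_rpow.2 hθ)
    refine (h1.mul_left ((2 : ℝ) ^ θ)).congr fun j => ?_
    push_cast
    rw [Real.div_rpow (by norm_num) (by positivity)]
    ring
  set K := ∑' j : ℕ, (2 / ((j : ℝ) + 1)) ^ θ with hK
  have hK0 : 0 ≤ K := tsum_nonneg fun j => by positivity
  have hΩ : 0 ≤ F b - F a := sub_nonneg.2 (hF a b le_rfl hab.le le_rfl)
  have step : ∀ i ∈ Finset.range n, |f (ξ i) * (g (t (i + 1)) - g (t i))
      - lsum f g (m + 1) (fun j => clamp (t i) (t (i + 1)) (s j))|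
      ≤ ε * ((1 + K) * (F b - F a) ^ (θ - 1)) * (F (t (i + 1)) - F (t i)) := by
    intro i hi
    rw [Finset.mem_range] at hi
    have h := hξ i hi
    have hti : t i ≤ t (i + 1) := ht (by omega)
    have hy := young_local f g F (t i) (t (i + 1)) ε θ hε (by linarith)
      (fun x y hx hxy hy => hF x y ((hlo i).trans hx) hxy (hy.trans (hhi _ hi)))
      (fun x y hx hxy hy => hfg x y ((hlo i).trans hx) hxy (hy.trans (hhi _ hi)) (by linarith [h.2.2]))
      (ξ i) ⟨h.1, h.2.1⟩ m (fun j => clamp (t i) (t (i + 1)) (s j))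
      (fun j k hjk => max_le_max le_rfl (min_le_min (hs hjk) le_rfl))
      (by simp only [clamp, hs0]; exact max_eq_left ((min_le_left _ _).trans (hlo i)))
      (by simp only [clamp, hsm]; rw [min_eq_right (hhi _ hi), max_eq_right hti])
    have hω : 0 ≤ F (t (i + 1)) - F (t i) := sub_nonneg.2 (hF _ _ (hlo _) hti (hhi _ hi))
    have hω' : F (t (i + 1)) - F (t i) ≤ F b - F a := by
      have := hF _ _ le_rfl (hlo i) (hti.trans (hhi _ hi))
      have := hF _ _ (hlo (i + 1)) (hhi _ hi) le_rfl
      linarith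
    refine hy.trans ?_
    rw [mul_assoc]
    apply mul_le_mul_of_nonneg_left _ hε
    rw [mul_assoc]
    have hpow : (F (t (i + 1)) - F (t i)) ^ θ
        ≤ (F b - F a) ^ (θ - 1) * (F (t (i + 1)) - F (t i)) := by
      have e : θ = (θ - 1) + 1 := by ring
      conv_lhs => rw [e]
      rw [Real.rpow_add_of_nonneg hω (by linarith) (by norm_num), Real.rpow_one]
      apply mul_le_mul_of_nonneg_right _ hω
      exact Real.rpow_le_rpow hω hω' (by linarith)
    apply mul_le_mul _ hpow (by positivity) (by positivity)
    have := hsum.sum_le_tsum (Finset.range m) (fun j _ => by positivity)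
    linarith
  unfold rsum
  rw [← Finset.sum_sub_distrib]
  refine (Finset.abs_sum_le_sum_abs _ _).trans ((Finset.sum_le_sum step).trans ?_)
  rw [← Finset.mul_sum, Finset.sum_range_sub (fun i => F (t i)), ht0, htn]
  apply le_of_eq
  have e : θ = (θ - 1) + 1 := by ring
  conv_rhs => rw [e]
  rw [Real.rpow_add_of_nonneg hΩ (by linarith) (by norm_num), Real.rpow_one]
  have e' : θ - 1 + 1 = θ := by ring
  simp only [e'] at *
  ring

lemma clamp_sum_symm (f g : ℝ → ℝ) (n m : ℕ) (t s : ℕ → ℝ) (ht : Monotone t) (hs : Monotone s) :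
    ∑ i ∈ Finset.range n, lsum f g m (fun j => clamp (t i) (t (i + 1)) (s j))
      = ∑ j ∈ Finset.range m, lsum f g n (fun i => clamp (s j) (s (j + 1)) (t i)) := by
  unfold lsum
  rw [Finset.sum_comm]
  refine Finset.sum_congr rfl fun j _ => Finset.sum_congr rfl fun i _ => ?_
  exact clamp_symm f g _ _ _ _ (ht (by omega)) (hs (by omega))

/-- the product of increments is small relative to the control -/
lemma key_small (a b : ℝ) (hab : a < b) (p q : ℝ) (hp : 1 < p) (hq : 1 < q)
    (hpq : 1 / p + 1 / q > 1)
    (f g : ℝ → ℝ) (hfg : NoCommonDiscont f g a b)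
    (hf : pVar f p a b < ⊤) (hg : pVar g q a b < ⊤) :
    ∃ F : ℝ → ℝ, ∃ θ > (1 : ℝ), (∀ x y, a ≤ x → x ≤ y → y ≤ b → F x ≤ F y) ∧
    ∀ ε > 0, ∃ δ > 0, ∀ x y, a ≤ x → x ≤ y → y ≤ b → y - x < δ →
      ∀ u ∈ Icc x y, ∀ v ∈ Icc x y, ∀ w ∈ Icc x y,
      ∀ z ∈ Icc x y, |f u - f v| * |g w - g z| ≤ ε * (F y - F x) ^ θ := by
  obtain ⟨F₁, h₁⟩ := control_fn f p a b (by linarith) hf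
  obtain ⟨F₂, h₂⟩ := control_fn g q a b (by linarith) hg
  have m₁ : ∀ x y, a ≤ x → x ≤ y → y ≤ b → F₁ x ≤ F₁ y := fun x y hx hxy hy => by
    have := h₁ x y hx hxy hy
    have : 0 ≤ |f y - f x| ^ p := by positivity
    linarith
  have m₂ : ∀ x y, a ≤ x → x ≤ y → y ≤ b → F₂ x ≤ F₂ y := fun x y hx hxy hy => by
    have := h₂ x y hx hxy hy
    have : 0 ≤ |g y - g x| ^ q := by positivity
    linarith
  set F : ℝ → ℝ := fun x => F₁ x + F₂ x with hFdef
  have mF : ∀ x y, a ≤ x → x ≤ y → y ≤ b → F x ≤ F y := fun x y hx hxy hy =>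
    add_le_add (m₁ x y hx hxy hy) (m₂ x y hx hxy hy)
  have gen : ∀ (h F' : ℝ → ℝ) (r : ℝ), 1 < r → (∀ x y, a ≤ x → x ≤ y → y ≤ b → F' x ≤ F' y) →
      (∀ x y, a ≤ x → x ≤ y → y ≤ b → F' y - F' x ≤ F y - F x) →
      (∀ s t, a ≤ s → s ≤ t → t ≤ b → |h t - h s| ^ r ≤ F' t - F' s) →
      ∀ x y, a ≤ x → x ≤ y → y ≤ b → ∀ u ∈ Icc x y, ∀ v ∈ Icc x y,
        |h u - h v| ≤ (F y - F x) ^ (1 / r) := by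
    intro h F' r hr hm hle hh x y hx hxy hy
    have main : ∀ u ∈ Icc x y, ∀ v ∈ Icc x y, u ≤ v → |h v - h u| ≤ (F y - F x) ^ (1 / r) := by
      intro u hu v hv huv
      have h1 := hh u v (hx.trans hu.1) huv (hv.2.trans hy)
      have h2 := hm x u hx hu.1 (hu.2.trans hy)
      have h3 := hm v y (hx.trans hv.1) hv.2 hy
      have h4 := hle x y hx hxy hy
      have h5 : |h v - h u| ^ r ≤ F y - F x := by linarith
      have h6 := Real.rpow_le_rpow (z := 1 / r) (by positivity) h5 (by positivity)
      rwa [← Real.rpow_mul (abs_nonneg _), mul_one_div_cancel (by linarith), Real.rpow_one] at h6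
    intro u hu v hv
    rcases le_total u v with huv | huv
    · rw [abs_sub_comm]; exact main u hu v hv huv
    · exact main v hv u hu huv
  have bf := gen f F₁ p hp m₁ (fun x y hx hxy hy => by
    have := m₂ x y hx hxy hy
    simp only [hFdef]; linarith) h₁
  have bg := gen g F₂ q hq m₂ (fun x y hx hxy hy => by
    have := m₁ x y hx hxy hy
    simp only [hFdef]; linarith) h₂
  set σ := 1 / p + 1 / q with hσ
  have hp0 : 0 < 1 / p := by positivity
  have hq0 : 0 < 1 / q := by positivity
  have hσ0 : 0 < σ := by linarith
  set l := (σ + 1) / 2 / σ with hl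
  have hl1 : l < 1 := by rw [hl, div_lt_one hσ0]; linarith
  have hl0 : 0 < l := by positivity
  have hlσ : σ * l = (σ + 1) / 2 := by rw [hl]; field_simp
  refine ⟨F, (σ + 1) / 2, by linarith, mF, fun ε hε => ?_⟩
  have hΩ : 0 ≤ F b - F a := sub_nonneg.2 (mF a b le_rfl hab.le le_rfl)
  set M := 1 + (F b - F a) ^ (1 / p) + (F b - F a) ^ (1 / q) with hM
  have hA : 0 ≤ (F b - F a) ^ (1 / p) := by positivity
  have hB : 0 ≤ (F b - F a) ^ (1 / q) := by positivity
  have hM0 : 0 < M := by positivity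
  obtain ⟨δ, hδ, H⟩ := osc_small f g a b hfg (ε ^ (1 / (1 - l)) / M) (by positivity)
  refine ⟨δ, hδ, fun x y hx hxy hy hd u hu v hv w hw z hz => ?_⟩
  have hω : 0 ≤ F y - F x := sub_nonneg.2 (mF x y hx hxy hy)
  have sub : ∀ r ∈ Icc x y, r ∈ Icc a b := fun r hr => ⟨hx.trans hr.1, hr.2.trans hy⟩
  have fM : |f u - f v| ≤ M := by
    have := bf a b le_rfl hab.le le_rfl u (sub u hu) v (sub v hv)
    linarith
  have gM : |g w - g z| ≤ M := by
    have := bg a b le_rfl hab.le le_rfl w (sub w hw) z (sub z hz)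
    linarith
  set X := |f u - f v| * |g w - g z| with hX
  have hX0 : 0 ≤ X := by positivity
  have b1 : X ≤ ε ^ (1 / (1 - l)) := by
    have e : ε ^ (1 / (1 - l)) = ε ^ (1 / (1 - l)) / M * M := by field_simp
    rw [e]
    rcases H x y hx hy hxy hd with h | h
    · exact mul_le_mul (h u hu v hv) gM (abs_nonneg _) (by positivity)
    · rw [hX, mul_comm]
      exact mul_le_mul (h w hw z hz) fM (abs_nonneg _) (by positivity)
  have b2 : X ≤ (F y - F x) ^ σ := by
    rw [hσ, Real.rpow_add_of_nonneg hω hp0.le hq0.le]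
    exact mul_le_mul (bf x y hx hxy hy u hu v hv) (bg x y hx hxy hy w hw z hz) (abs_nonneg _)
      (by positivity)
  have c1 := Real.rpow_le_rpow (z := 1 - l) hX0 b1 (by linarith)
  have c2 := Real.rpow_le_rpow (z := l) hX0 b2 hl0.le
  rw [← Real.rpow_mul hε.le, one_div_mul_cancel (by linarith), Real.rpow_one] at c1
  rw [← Real.rpow_mul hω, hlσ] at c2
  calc X = X ^ (1 - l) * X ^ l := by
        rw [← Real.rpow_add_of_nonneg hX0 (by linarith) hl0.le]; simp
    _ ≤ _ := mul_le_mul c1 c2 (by positivity) hε.le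

/-- Young's theorem: existence of the Riemann–Stieltjes integral for integrand of
finite `p`-variation and integrator of finite `q`-variation, `1/p + 1/q > 1`. -/
theorem rs_integral_exists_of_finite_p_q_variation
    (a b : ℝ) (hab : a < b) (p q : ℝ) (hp : 1 < p) (hq : 1 < q)
    (hpq : 1 / p + 1 / q > 1)
    (f g : ℝ → ℝ) (hfg : NoCommonDiscont f g a b)
    (hf : pVar f p a b < ⊤) (hg : pVar g q a b < ⊤) :
    ∃ I : ℝ, RSIntegral f g a b I := by
  obtain ⟨F, θ, hθ, hF, H⟩ := key_small a b hab p q hp hq hpq f g hfg hf hg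
  have cauchy : ∀ ε > 0, ∃ δ > 0, ∀ n m t ξ s η, TP a b δ n t ξ → TP a b δ m s η →
      |rsum f g n t ξ - rsum f g m s η| ≤ ε := by
    intro ε hε
    set C := (1 + ∑' j : ℕ, (2 / ((j : ℝ) + 1)) ^ θ) * (F b - F a) ^ θ with hC
    have hΩ : 0 ≤ F b - F a := sub_nonneg.2 (hF a b le_rfl hab.le le_rfl)
    have hK0 : 0 ≤ ∑' j : ℕ, (2 / ((j : ℝ) + 1)) ^ θ := tsum_nonneg fun j => by positivity
    have hC0 : 0 ≤ C := by positivity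
    have he : 0 < ε / (2 * (C + 1)) := by positivity
    obtain ⟨δ, hδ, h⟩ := H _ he
    refine ⟨δ, hδ, fun n m t ξ s η h1 h2 => ?_⟩
    have b1 := refine_bound f g F a b _ θ δ hab he.le hθ hF h n m t ξ s h1 h2.1 h2.2.1 h2.2.2.1
    have b2 := refine_bound f g F a b _ θ δ hab he.le hθ hF h m n s η t h2 h1.1 h1.2.1 h1.2.2.1
    rw [clamp_sum_symm f g n m t s h1.1 h2.1] at b1
    rw [← hC] at b1 b2
    have e : ε / (2 * (C + 1)) * C ≤ ε / 2 := by
      rw [div_mul_eq_mul_div, div_le_div_iff₀ (by positivity) (by norm_num)]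
      nlinarith
    rw [abs_le] at *
    constructor <;> linarith [b1.1, b1.2, b2.1, b2.2]
  -- uniform partitions
  let U : ℕ → ℕ → ℝ := fun N k => a + (b - a) / (N + 1) * k
  have hU : ∀ δ > 0, ∃ N₀, ∀ N ≥ N₀, TP a b δ (N + 1) (U N) (U N) := by
    intro δ hδ
    obtain ⟨N₀, hN₀⟩ := exists_nat_gt ((b - a) / δ)
    refine ⟨N₀, fun N hN => ?_⟩
    have hpos : 0 < (b - a) / ((N : ℝ) + 1) := div_pos (by linarith) (by positivity)
    have hmono : Monotone (U N) := by
      intro i j hij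
      have : (i : ℝ) ≤ j := by exact_mod_cast hij
      simp only [U]
      gcongr
    refine ⟨hmono, by simp [U], ?_, fun k _ => ⟨le_rfl, hmono (by omega), ?_⟩⟩
    · simp only [U]; push_cast; field_simp; ring
    · have : (N₀ : ℝ) ≤ N := by exact_mod_cast hN
      have h2 : (b - a) / ((N : ℝ) + 1) < δ := by
        rw [div_lt_iff₀ (by positivity)]
        rw [div_lt_iff₀ hδ] at hN₀
        nlinarith
      simp only [U]; push_cast
      linarith
  let S : ℕ → ℝ := fun N => rsum f g (N + 1) (U N) (U N)
  have hS : CauchySeq S := by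
    rw [Metric.cauchySeq_iff]
    intro ε hε
    obtain ⟨δ, hδ, h⟩ := cauchy (ε / 2) (by positivity)
    obtain ⟨N₀, hN⟩ := hU δ hδ
    refine ⟨N₀, fun m hm n hn => ?_⟩
    rw [Real.dist_eq]
    exact (h _ _ _ _ _ _ (hN m hm) (hN n hn)).trans_lt (by linarith)
  obtain ⟨I, hI⟩ := cauchySeq_tendsto_of_complete hS
  refine ⟨I, fun ε hε => ?_⟩
  obtain ⟨δ, hδ, h⟩ := cauchy (ε / 2) (by positivity)
  refine ⟨δ, hδ, fun n t ξ ht h0 hn hξ hm => ?_⟩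
  let t' : ℕ → ℝ := fun k => t ⟨min k n, by omega⟩
  let ξ' : ℕ → ℝ := fun k => if hk : k < n then ξ ⟨k, hk⟩ else b
  have tc : ∀ i : Fin n, t' i = t i.castSucc := by
    intro i
    simp only [t']
    congr 1
    ext
    simp [i.2.le]
  have ts : ∀ i : Fin n, t' (i + 1) = t i.succ := by
    intro i
    simp only [t']
    congr 1
    ext
    simp only [Fin.val_succ]
    omega
  have xc : ∀ i : Fin n, ξ' i = ξ i := by
    intro i
    simp [ξ']
  have hTP : TP a b δ n t' ξ' := by
    refine ⟨fun i j hij => ht.monotone ?_, ?_, ?_, fun k hk => ?_⟩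
    · rw [Fin.mk_le_mk]; omega
    · rw [← h0]; simp [t', Fin.last]
    · rw [← hn]; simp [t', Fin.last]
    · have e1 := tc ⟨k, hk⟩
      have e2 := ts ⟨k, hk⟩
      have e3 := xc ⟨k, hk⟩
      simp only at e1 e2 e3
      rw [e1, e2, e3]
      exact ⟨(hξ _).1, (hξ _).2, hm _⟩
  have hsum : ∑ i : Fin n, f (ξ i) * (g (t i.succ) - g (t i.castSucc)) = rsum f g n t' ξ' := by
    unfold rsum
    rw [Finset.sum_range]
    refine Finset.sum_congr rfl fun i _ => ?_
    rw [tc, ts, xc]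
  rw [hsum]
  obtain ⟨N₀, hN⟩ := hU δ hδ
  have lim : Tendsto (fun N => |rsum f g n t' ξ' - S N|) atTop (nhds |rsum f g n t' ξ' - I|) :=
    (tendsto_const_nhds.sub hI).abs
  have : |rsum f g n t' ξ' - I| ≤ ε / 2 := by
    refine le_of_tendsto lim ?_
    filter_upwards [eventually_ge_atTop N₀] with N hNN
    exact h _ _ _ _ _ _ hTP (hN N hNN)
  linarith
end
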